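/- arXiv:2401.02904 — 7 statements merged into one kernel-verified Lean document; each statement's English description precedes it below -/
import Mathlib

section
/- Let V be a random variable with values in a standard Borel space 𝒱 and U a random variable with values in {−1,+1}, jointly distributed, such that the marginal law of U is uniform on {−1,+1}. Fix two points z^- = (x^-,y^-) and z^+ = (x^+,y^+) in 𝒵 = 𝒳×𝒴, fix y ∈ 𝒴, and let h: 𝒱×𝒵 → [0,1] be jointly measurable. Writing z^{U} for z^+ when U=+1 and z^- when U=−1 (and z^{−U} for the opposite point, with label y^{U}, y^{−U} respectively), one has E[𝟙{y^{U}=y}·h(V,z^{U}) − 𝟙{y^{−U}=y}·h(V,z^{−U})] ≤ sqrt(2·max(𝟙{y^-=y}, 𝟙{y^+=y})·I(V;U)), where I(V;U) = KL(P_{V,U} ‖ P_V ⊗ P_U) is the mutual information between V and U. -/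
open MeasureTheory ProbabilityTheory
open scoped ENNReal

noncomputable section

open Classical in
/-- Kullback–Leibler divergence: `∞` unless `μ ≪ ν` and the log-likelihood ratio is
`μ`-integrable. -/
def KL {α : Type*} [MeasurableSpace α] (μ ν : Measure α) : ℝ≥0∞ :=
  if μ ≪ ν ∧ Integrable (llr μ ν) μ then ENNReal.ofReal (∫ x, llr μ ν x ∂μ) else ∞

/-- Donsker–Varadhan plus Hoeffding for functions with values in `[-1,1]`, mean zero. -/
lemma sq_integral_le_aux {α : Type*} [MeasurableSpace α] (P Q : Measure α)
    [IsProbabilityMeasure P] [IsProbabilityMeasure Q] (hPQ : P ≪ Q)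
    (hInt : Integrable (llr P Q) P) (f : α → ℝ) (hf : Measurable f)
    (hb : ∀ x, f x ∈ Set.Icc (-1 : ℝ) 1) (h0 : ∫ x, f x ∂Q = 0) :
    (∫ x, f x ∂P) ^ 2 ≤ 2 * ∫ x, llr P Q x ∂P := by
  have hsub := hasSubgaussianMGF_of_mem_Icc_of_integral_eq_zero (μ := Q) hf.aemeasurable
    (Filter.Eventually.of_forall hb) h0
  set m := ∫ x, f x ∂P with hm
  have hexp := hsub.integrable_exp_mul m
  have hmgf := hsub.mgf_le m
  have hfP : Integrable f P :=
    Integrable.of_mem_Icc (-1) 1 hf.aemeasurable (Filter.Eventually.of_forall hb)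
  have hfP' : Integrable (fun x => m * f x) P := hfP.const_mul m
  have : IsProbabilityMeasure (Q.tilted fun x => m * f x) := isProbabilityMeasure_tilted hexp
  have hg := InformationTheory.integral_llr_add_sub_measure_univ_nonneg
    (hPQ.trans (absolutelyContinuous_tilted hexp))
    (integrable_llr_tilted_right hPQ hfP' hInt hexp)
  rw [integral_llr_tilted_right hPQ hfP' hexp hInt, integral_const_mul] at hg
  have hpos : 0 < ∫ x, Real.exp (m * f x) ∂Q := integral_exp_pos hexp
  have hlog : Real.log (∫ x, Real.exp (m * f x) ∂Q) ≤ m ^ 2 / 2 := by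
    rw [Real.log_le_iff_le_exp hpos]
    refine hmgf.trans_eq ?_
    congr 1
    norm_num
  simp only [probReal_univ] at hg
  nlinarith

/-- **Lemma B.2**: `V` a random variable in a standard Borel space, `U` uniform on `{−1,+1}`
(encoded as `Bool`, `true ↔ +1`), `z⁻, z⁺` two fixed points of `𝒳 × 𝒴`, `h` a `[0,1]`-valued
jointly measurable function.  Then
`E[𝟙{y^U=y}·h(V,z^U) − 𝟙{y^{−U}=y}·h(V,z^{−U})]
  ≤ sqrt (2 max(𝟙{y⁻=y}, 𝟙{y⁺=y}) I(V;U))`. -/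
theorem supersample_key_lemma
    {Ω 𝒱 𝒳 𝒴 : Type*} [MeasurableSpace Ω]
    [MeasurableSpace 𝒱] [StandardBorelSpace 𝒱]
    [MeasurableSpace 𝒳] [StandardBorelSpace 𝒳]
    [MeasurableSpace 𝒴] [Countable 𝒴] [MeasurableSingletonClass 𝒴] [DecidableEq 𝒴]
    (μ : Measure Ω) [IsProbabilityMeasure μ]
    (V : Ω → 𝒱) (hV : Measurable V)
    (U : Ω → Bool) (hU : Measurable U)
    (hUunif : ∀ b, μ.map U {b} = 1 / 2)
    (zm zp : 𝒳 × 𝒴) (y : 𝒴)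
    (h : 𝒱 → 𝒳 × 𝒴 → ℝ) (hh : Measurable fun p : 𝒱 × (𝒳 × 𝒴) => h p.1 p.2)
    (h01 : ∀ v z, h v z ∈ Set.Icc (0 : ℝ) 1) :
    ENNReal.ofReal
        (∫ ω,
          ((if (if U ω then zp else zm).2 = y then h (V ω) (if U ω then zp else zm) else 0) -
            (if (if U ω then zm else zp).2 = y then h (V ω) (if U ω then zm else zp) else 0)) ∂μ)
      ≤ (2 * max (if zm.2 = y then (1 : ℝ≥0∞) else 0) (if zp.2 = y then (1 : ℝ≥0∞) else 0) *
          KL (μ.map fun ω => (V ω, U ω)) ((μ.map V).prod (μ.map U))) ^ (1 / 2 : ℝ) := by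
  have hz : ∀ z, Measurable fun v => h v z := fun z => hh.comp (measurable_id.prodMk measurable_const)
  set g : 𝒱 → ℝ := fun v => (if zp.2 = y then h v zp else 0) - (if zm.2 = y then h v zm else 0)
    with hgdef
  have hg : Measurable g := by
    refine Measurable.sub ?_ ?_
    · split_ifs
      exacts [hz zp, measurable_const]
    · split_ifs
      exacts [hz zm, measurable_const]
  have hgb : ∀ v, g v ∈ Set.Icc (-1 : ℝ) 1 := by
    intro v
    have h1 := h01 v zp
    have h2 := h01 v zm
    simp only [hgdef, Set.mem_Icc] at *
    split_ifs <;> constructor <;> linarith [h1.1, h1.2, h2.1, h2.2]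
  set f : 𝒱 × Bool → ℝ := fun p => if p.2 then g p.1 else - g p.1 with hfdef
  have hf : Measurable f := by
    refine Measurable.ite ?_ (hg.comp measurable_fst) (hg.comp measurable_fst).neg
    exact measurable_snd (measurableSet_singleton true)
  have hfb : ∀ p, f p ∈ Set.Icc (-1 : ℝ) 1 := by
    rintro ⟨v, b⟩
    have := hgb v
    simp only [Set.mem_Icc] at this
    cases b <;> simp [hfdef] <;> constructor <;> linarith [this.1, this.2]
  have hVU : Measurable fun ω => (V ω, U ω) := hV.prodMk hU
  have hInt : (∫ ω,
          ((if (if U ω then zp else zm).2 = y then h (V ω) (if U ω then zp else zm) else 0) -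
            (if (if U ω then zm else zp).2 = y then h (V ω) (if U ω then zm else zp) else 0)) ∂μ)
      = ∫ p, f p ∂(μ.map fun ω => (V ω, U ω)) := by
    rw [integral_map hVU.aemeasurable hf.aestronglyMeasurable]
    refine integral_congr_ae (Filter.Eventually.of_forall fun ω => ?_)
    cases hUω : U ω <;> simp [hfdef, hgdef, hUω]
  rw [hInt]
  have : IsProbabilityMeasure (μ.map V) := Measure.isProbabilityMeasure_map hV.aemeasurable
  have : IsProbabilityMeasure (μ.map U) := Measure.isProbabilityMeasure_map hU.aemeasurable
  have : IsProbabilityMeasure (μ.map fun ω => (V ω, U ω)) :=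
    Measure.isProbabilityMeasure_map hVU.aemeasurable
  by_cases hy : zm.2 = y ∨ zp.2 = y
  swap
  · push Not at hy
    have : f = fun _ => 0 := by
      funext p
      simp [hfdef, hgdef, hy.1, hy.2]
    simp [this]
  have hmax : max (if zm.2 = y then (1 : ℝ≥0∞) else 0) (if zp.2 = y then (1 : ℝ≥0∞) else 0) = 1 := by
    rcases hy with hy | hy <;> simp only [hy, if_true] <;> split_ifs <;> simp
  rw [hmax, mul_one]
  unfold KL
  split_ifs with hKL
  swap
  · rw [ENNReal.mul_top (by norm_num), ENNReal.top_rpow_of_pos (by norm_num)]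
    exact le_top
  have h0 : ∫ p, f p ∂((μ.map V).prod (μ.map U)) = 0 := by
    rw [integral_prod _ (Integrable.of_mem_Icc (-1) 1 hf.aemeasurable
      (Filter.Eventually.of_forall hfb))]
    have : ∀ v, ∫ b, f (v, b) ∂(μ.map U) = 0 := by
      intro v
      rw [integral_fintype Integrable.of_finite]
      simp [hfdef, measureReal_def, hUunif]
    simp [this]
  have key := sq_integral_le_aux _ _ hKL.1 hKL.2 f hf hfb h0
  set m := ∫ p, f p ∂(μ.map fun ω => (V ω, U ω))
  rw [show (2 : ℝ≥0∞) = ENNReal.ofReal 2 by simp, ← ENNReal.ofReal_mul (by norm_num),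
    ENNReal.ofReal_rpow_of_nonneg ((sq_nonneg m).trans key) (by norm_num), ← Real.sqrt_eq_rpow]
  exact ENNReal.ofReal_le_ofReal (Real.le_sqrt_of_sq_le key)
end
end

section
/- Assume the loss ℓ(w,x,y) takes values in [0,1]. Then the super-sample class-generalization error of class y satisfies |gen_y| ≤ E_{Z_{[2n]}}[(1/n^y) Σ_{i=1}^n sqrt(2·max(𝟙{Y_i^-=y}, 𝟙{Y_i^+=y})·I_{Z_{[2n]}}(W;U_i))]. -/
open MeasureTheory ProbabilityTheory
open scoped ENNReal

noncomputable section

/-- Fair coin measure on `Bool` (the law of a uniform `{−1,+1}` selector, `true ↔ +1`). -/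
def coin : Measure Bool :=
  (2 : ℝ≥0∞)⁻¹ • Measure.dirac true + (2 : ℝ≥0∞)⁻¹ • Measure.dirac false

/-- Disintegrated conditional mutual information `I_z(A;B)` given `Z = z`, defined through
regular conditional distributions: `KL(P_{A,B|Z=z} ‖ P_{A|Z=z} ⊗ P_{B|Z=z})`. -/
def dCMI {Ω γ α β : Type*} [MeasurableSpace Ω] [MeasurableSpace γ]
    [MeasurableSpace α] [StandardBorelSpace α] [Nonempty α]
    [MeasurableSpace β] [StandardBorelSpace β] [Nonempty β]
    (μ : Measure Ω) [IsFiniteMeasure μ]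
    (A : Ω → α) (B : Ω → β) (Z : Ω → γ) (z : γ) : ℝ≥0∞ :=
  KL (condDistrib (fun ω => (A ω, B ω)) Z μ z)
    ((condDistrib A Z μ z).prod (condDistrib B Z μ z))

/-- The super-sample entry selected by `u`, i.e. `z^{u}` (the training sample):
`zz = (z⁻, z⁺)` and `u = true` means `+1`. -/
def trainSel {𝒵 : Type*} (zz : 𝒵 × 𝒵) (u : Bool) : 𝒵 := if u then zz.2 else zz.1

/-- The super-sample entry not selected by `u`, i.e. `z^{−u}` (the test sample). -/
def testSel {𝒵 : Type*} (zz : 𝒵 × 𝒵) (u : Bool) : 𝒵 := if u then zz.1 else zz.2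


lemma dv_bound {α : Type*} [MeasurableSpace α] (P Q : Measure α) [IsProbabilityMeasure P]
    [IsProbabilityMeasure Q] (f : α → ℝ) (hf : Measurable f) (hb : ∀ x, |f x| ≤ 1)
    (hmgf : ∀ t : ℝ, ∫ x, Real.exp (t * f x) ∂Q ≤ Real.exp (t ^ 2 / 2)) :
    ENNReal.ofReal |∫ x, f x ∂P| ≤ (2 * KL P Q) ^ (1 / 2 : ℝ) := by
  unfold KL
  split_ifs with h
  · obtain ⟨hac, hint⟩ := h
    set t := ∫ x, f x ∂P with ht
    have hfi : Integrable (fun x => t * f x) P :=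
      (Integrable.of_bound hf.aestronglyMeasurable 1 (by simpa using .of_forall hb)).const_mul t
    have hei : Integrable (fun x => Real.exp (t * f x)) Q := by
      refine Integrable.of_bound (by fun_prop) (Real.exp |t|) (.of_forall fun x => ?_)
      rw [Real.norm_eq_abs, Real.abs_exp]
      refine Real.exp_le_exp.2 ((le_abs_self _).trans ?_)
      rw [abs_mul]
      exact mul_le_of_le_one_right (abs_nonneg _) (hb x)
    have hpt := isProbabilityMeasure_tilted hei
    have h1 := InformationTheory.integral_llr_add_sub_measure_univ_nonneg
      (hac.trans (absolutelyContinuous_tilted hei)) (integrable_llr_tilted_right hac hfi hint hei)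
    rw [integral_llr_tilted_right hac hfi hei hint, integral_const_mul, ← ht] at h1
    simp only [probReal_univ] at h1
    have h2 : Real.log (∫ x, Real.exp (t * f x) ∂Q) ≤ t ^ 2 / 2 := by
      rw [Real.log_le_iff_le_exp (integral_exp_pos hei)]
      exact hmgf t
    have h3 : t ^ 2 ≤ 2 * ∫ x, llr P Q x ∂P := by nlinarith
    rw [show (2 : ℝ≥0∞) = ENNReal.ofReal 2 by simp, ← ENNReal.ofReal_mul (by norm_num),
      ENNReal.ofReal_rpow_of_nonneg ((sq_nonneg t).trans h3) (by norm_num), ← Real.sqrt_eq_rpow]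
    exact ENNReal.ofReal_le_ofReal (Real.abs_le_sqrt h3)
  · simp

lemma integral_coin (g : Bool → ℝ) : ∫ u, g u ∂coin = (g true + g false) / 2 := by
  unfold coin
  rw [integral_add_measure ((integrable_dirac (by simp)).smul_measure (by simp))
      ((integrable_dirac (by simp)).smul_measure (by simp)),
    integral_smul_measure, integral_smul_measure]
  simp
  ring

instance : IsProbabilityMeasure coin := ⟨by simp [coin, ENNReal.inv_two_add_inv_two]⟩

/-- Bound for a product reference measure with a fair coin as second marginal. -/
lemma coin_bound {𝒲 : Type*} [MeasurableSpace 𝒲] (P : Measure (𝒲 × Bool)) (ρ : Measure 𝒲)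
    [IsProbabilityMeasure P] [IsProbabilityMeasure ρ] (a b : 𝒲 → ℝ)
    (ha : Measurable a) (hb : Measurable b) (hab : ∀ w, |a w - b w| ≤ 1) :
    ENNReal.ofReal |∫ p, (if p.2 then a p.1 - b p.1 else b p.1 - a p.1) ∂P|
      ≤ (2 * KL P (ρ.prod coin)) ^ (1 / 2 : ℝ) := by
  have hm : Measurable fun p : 𝒲 × Bool => (if p.2 then a p.1 - b p.1 else b p.1 - a p.1) := by
    refine Measurable.ite (measurable_snd (measurableSet_singleton true)) ?_ ?_ <;> fun_prop
  have hbd : ∀ p : 𝒲 × Bool, |if p.2 then a p.1 - b p.1 else b p.1 - a p.1| ≤ 1 := by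
    intro p
    split_ifs
    · exact hab _
    · rw [abs_sub_comm]; exact hab _
  refine dv_bound P _ _ hm hbd fun t => ?_
  have hei : Integrable (fun p : 𝒲 × Bool =>
      Real.exp (t * (if p.2 then a p.1 - b p.1 else b p.1 - a p.1))) (ρ.prod coin) := by
    refine Integrable.of_bound (by fun_prop) (Real.exp |t|) (.of_forall fun x => ?_)
    rw [Real.norm_eq_abs, Real.abs_exp]
    refine Real.exp_le_exp.2 ((le_abs_self _).trans ?_)
    rw [abs_mul]
    exact mul_le_of_le_one_right (abs_nonneg _) (hbd x)
  rw [integral_prod _ hei]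
  have key : ∀ w, ∫ u, Real.exp (t * (if u = true then a w - b w else b w - a w)) ∂coin
      ≤ Real.exp (t ^ 2 / 2) := by
    intro w
    rw [integral_coin]
    simp only [if_true, Bool.false_eq_true, if_false]
    have h := Real.cosh_le_exp_half_sq (t * (a w - b w))
    rw [Real.cosh_eq, show -(t * (a w - b w)) = t * (b w - a w) by ring] at h
    refine h.trans (Real.exp_le_exp.2 ?_)
    have := (sq_le_one_iff_abs_le_one _).2 (hab w)
    rw [mul_pow]
    nlinarith [sq_nonneg t]
  calc _ ≤ ∫ _, Real.exp (t ^ 2 / 2) ∂ρ :=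
        integral_mono hei.integral_prod_left (integrable_const _) key
    _ = _ := by simp

/-- **Theorem 2 (class-CMI bound)**: in the super-sample setting, for a bounded loss
`ℓ ∈ [0,1]`, the class-generalization error of class `y` satisfies
`|gen_y| ≤ E_{Z_{[2n]}}[(1/n^y) Σ_i sqrt (2 max(𝟙{Y_i⁻=y},𝟙{Y_i⁺=y}) I_{Z_{[2n]}}(W;U_i))]`. -/
theorem class_CMI_bound
    {Ω 𝒲 𝒳 𝒴 : Type*}
    [mΩ : MeasurableSpace Ω] [StandardBorelSpace Ω] [Nonempty Ω]
    [MeasurableSpace 𝒲] [StandardBorelSpace 𝒲] [Nonempty 𝒲]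
    [MeasurableSpace 𝒳] [StandardBorelSpace 𝒳]
    [MeasurableSpace 𝒴] [Countable 𝒴] [MeasurableSingletonClass 𝒴] [DecidableEq 𝒴]
    (μ : Measure Ω) [IsProbabilityMeasure μ]
    (n : ℕ) (hn : 0 < n)
    (PZ : Measure (𝒳 × 𝒴)) [IsProbabilityMeasure PZ]
    (Z : Ω → Fin n → (𝒳 × 𝒴) × (𝒳 × 𝒴)) (hZ : Measurable Z)
    (U : Ω → Fin n → Bool) (hU : Measurable U)
    (W : Ω → 𝒲) (hW : Measurable W)
    -- the super-sample consists of 2n i.i.d. draws from `PZ`, independent of the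
    -- i.i.d. uniform selectors `U`
    (hlaw : μ.map (fun ω => (Z ω, U ω)) =
      (Measure.pi fun _ : Fin n => PZ.prod PZ).prod (Measure.pi fun _ : Fin n => coin))
    -- `W` depends on `(Z, U)` only through the training set `S` (Markov property)
    (hSle : MeasurableSpace.comap (fun ω (i : Fin n) => trainSel (Z ω i) (U ω i))
        inferInstance ≤ mΩ)
    (hMarkov : CondIndepFun
      (MeasurableSpace.comap (fun ω (i : Fin n) => trainSel (Z ω i) (U ω i)) inferInstance)
      hSle W (fun ω => (Z ω, U ω)) μ)
    (ℓ : 𝒲 → 𝒳 → 𝒴 → ℝ) (hℓ : Measurable fun p : 𝒲 × 𝒳 × 𝒴 => ℓ p.1 p.2.1 p.2.2)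
    (hℓ01 : ∀ w x y', ℓ w x y' ∈ Set.Icc (0 : ℝ) 1)
    (y : 𝒴) (hy : 0 < PZ (Prod.snd ⁻¹' {y})) :
    ENNReal.ofReal
        |∫ ω, (1 / ((n : ℝ) * (PZ (Prod.snd ⁻¹' {y})).toReal)) *
            ∑ i, ((if (testSel (Z ω i) (U ω i)).2 = y then
                    ℓ (W ω) (testSel (Z ω i) (U ω i)).1 (testSel (Z ω i) (U ω i)).2 else 0) -
                  (if (trainSel (Z ω i) (U ω i)).2 = y then
                    ℓ (W ω) (trainSel (Z ω i) (U ω i)).1 (trainSel (Z ω i) (U ω i)).2 else 0))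
          ∂μ|
      ≤ ∫⁻ z, ENNReal.ofReal (1 / ((n : ℝ) * (PZ (Prod.snd ⁻¹' {y})).toReal)) *
            ∑ i, (2 * max (if (z i).1.2 = y then (1 : ℝ≥0∞) else 0)
                          (if (z i).2.2 = y then (1 : ℝ≥0∞) else 0) *
                  dCMI μ W (fun ω => U ω i) Z z) ^ (1 / 2 : ℝ)
          ∂(μ.map Z) := by
  -- the per-index loss difference as a function of `(z, (w, u))`
  set L : 𝒲 → 𝒳 × 𝒴 → ℝ := fun w p => if p.2 = y then ℓ w p.1 p.2 else 0 with hL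
  have hLm : Measurable fun q : 𝒲 × (𝒳 × 𝒴) => L q.1 q.2 := by
    refine Measurable.ite ?_ hℓ measurable_const
    exact (measurable_snd.comp measurable_snd) (measurableSet_singleton y)
  have hL0 : ∀ w p, 0 ≤ L w p := fun w p => by
    simp only [hL]; split_ifs
    · exact (hℓ01 _ _ _).1
    · exact le_rfl
  have hL1 : ∀ w p, L w p ≤ 1 := fun w p => by
    simp only [hL]; split_ifs
    · exact (hℓ01 _ _ _).2
    · exact zero_le_one
  let G : Fin n → (Fin n → (𝒳 × 𝒴) × (𝒳 × 𝒴)) × (𝒲 × Bool) → ℝ := fun i q =>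
    if q.2.2 then L q.2.1 (q.1 i).1 - L q.2.1 (q.1 i).2
    else L q.2.1 (q.1 i).2 - L q.2.1 (q.1 i).1
  have hLab : ∀ w p p', |L w p - L w p'| ≤ 1 := fun w p p' => by
    rw [abs_le]; constructor <;> linarith [hL0 w p, hL1 w p, hL0 w p', hL1 w p']
  have hG1 : ∀ i q, |G i q| ≤ 1 := fun i q => by
    simp only [G]; split_ifs <;> exact hLab _ _ _
  have hGm : ∀ i, Measurable (G i) := fun i => by
    have e1 : Measurable fun q : (Fin n → (𝒳 × 𝒴) × (𝒳 × 𝒴)) × (𝒲 × Bool) =>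
        L q.2.1 (q.1 i).1 :=
      hLm.comp (f := fun q : (Fin n → (𝒳 × 𝒴) × (𝒳 × 𝒴)) × (𝒲 × Bool) => (q.2.1, (q.1 i).1))
        (by fun_prop)
    have e2 : Measurable fun q : (Fin n → (𝒳 × 𝒴) × (𝒳 × 𝒴)) × (𝒲 × Bool) =>
        L q.2.1 (q.1 i).2 :=
      hLm.comp (f := fun q : (Fin n → (𝒳 × 𝒴) × (𝒳 × 𝒴)) × (𝒲 × Bool) => (q.2.1, (q.1 i).2))
        (by fun_prop)
    refine Measurable.ite ?_ (e1.sub e2) (e2.sub e1)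
    exact (measurable_snd.comp measurable_snd) (measurableSet_singleton true)
  have hUi : ∀ i, Measurable fun ω => U ω i := fun i => (measurable_pi_apply i).comp hU
  have hWU : ∀ i, Measurable fun ω => (W ω, U ω i) := fun i => hW.prodMk (hUi i)
  have hZp : IsProbabilityMeasure (μ.map Z) := Measure.isProbabilityMeasure_map hZ.aemeasurable
  set h : Fin n → (Fin n → (𝒳 × 𝒴) × (𝒳 × 𝒴)) → ℝ := fun i z =>
    ∫ p, G i (z, p) ∂(condDistrib (fun ω => (W ω, U ω i)) Z μ z) with hh
  have hGi : ∀ i, Integrable (G i) (μ.map Z ⊗ₘ condDistrib (fun ω => (W ω, U ω i)) Z μ) :=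
    fun i => Integrable.of_bound (hGm i).aestronglyMeasurable 1 (.of_forall (hG1 i))
  have hhi : ∀ i, Integrable (h i) (μ.map Z) := fun i => (hGi i).integral_compProd
  have hdis : ∀ i, ∫ ω, G i (Z ω, (W ω, U ω i)) ∂μ = ∫ z, h i z ∂(μ.map Z) := fun i => by
    rw [← Measure.integral_compProd (hGi i), compProd_map_condDistrib (hWU i).aemeasurable,
      integral_map (hZ.prodMk (hWU i)).aemeasurable (hGm i).aestronglyMeasurable]
  have hGω : ∀ i, Integrable (fun ω => G i (Z ω, (W ω, U ω i))) μ := fun i =>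
    Integrable.of_bound ((hGm i).comp (hZ.prodMk (hWU i))).aestronglyMeasurable 1
      (.of_forall fun ω => hG1 i _)
  -- conditional law of each selector given the super-sample
  have hcoin : ∀ i, ∀ᵐ z ∂(μ.map Z), condDistrib (fun ω => U ω i) Z μ z = coin := fun i => by
    have hZlaw : μ.map Z = Measure.pi fun _ : Fin n => PZ.prod PZ := by
      have := congrArg (Measure.map Prod.fst) hlaw
      rwa [Measure.map_map measurable_fst (hZ.prodMk hU), Measure.map_fst_prod, measure_univ,
        one_smul] at this
    have := condDistrib_ae_eq_of_measure_eq_compProd (μ := μ) Z (hUi i).aemeasurable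
      (κ := Kernel.const _ coin) (by
        rw [Measure.compProd_const, hZlaw]
        have h2 := congrArg (Measure.map (Prod.map id (Function.eval i))) hlaw
        rw [Measure.map_map (by fun_prop) (hZ.prodMk hU),
          ← Measure.map_prod_map _ _ measurable_id (measurable_pi_apply i), Measure.map_id,
          (measurePreserving_eval (fun _ : Fin n => coin) i).map_eq] at h2
        exact h2)
    filter_upwards [this] with z hz
    rw [hz, Kernel.const_apply]
  set c : ℝ := 1 / ((n : ℝ) * (PZ (Prod.snd ⁻¹' {y})).toReal) with hc
  have hc0 : 0 ≤ c := by positivity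
  have hLHS : (∫ ω, c * ∑ i, ((if (testSel (Z ω i) (U ω i)).2 = y then
                    ℓ (W ω) (testSel (Z ω i) (U ω i)).1 (testSel (Z ω i) (U ω i)).2 else 0) -
                  (if (trainSel (Z ω i) (U ω i)).2 = y then
                    ℓ (W ω) (trainSel (Z ω i) (U ω i)).1 (trainSel (Z ω i) (U ω i)).2 else 0)) ∂μ)
      = ∫ z, c * ∑ i, h i z ∂(μ.map Z) := by
    rw [integral_const_mul, integral_const_mul, integral_finset_sum _ fun i _ => hhi i]
    simp_rw [← hdis]
    rw [← integral_finset_sum _ fun i _ => hGω i]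
    congr 1
    refine integral_congr_ae (.of_forall fun ω => Finset.sum_congr rfl fun i _ => ?_)
    simp only [G, hL]
    cases U ω i <;> simp [testSel, trainSel]
  rw [hLHS, ← Real.enorm_eq_ofReal_abs]
  refine (enorm_integral_le_lintegral_enorm _).trans (lintegral_mono_ae ?_)
  filter_upwards [ae_all_iff.2 hcoin] with z hz
  rw [enorm_mul, Real.enorm_eq_ofReal hc0]
  refine mul_le_mul_right ((enorm_sum_le _ _).trans (Finset.sum_le_sum fun i _ => ?_)) _
  by_cases hm : (z i).1.2 = y ∨ (z i).2.2 = y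
  · have hmax : max (if (z i).1.2 = y then (1 : ℝ≥0∞) else 0)
        (if (z i).2.2 = y then (1 : ℝ≥0∞) else 0) = 1 := by
      rcases hm with hm | hm <;> simp only [hm, if_true] <;> split_ifs <;> simp
    rw [hmax, mul_one, Real.enorm_eq_ofReal_abs, dCMI, hz i]
    exact coin_bound _ _ (fun w => L w (z i).1) (fun w => L w (z i).2)
      (hLm.comp (f := fun w => (w, (z i).1)) (by fun_prop))
      (hLm.comp (f := fun w => (w, (z i).2)) (by fun_prop)) fun w => hLab _ _ _
  · push Not at hm
    have : h i z = 0 := by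
      simp only [hh, G, hL, if_neg hm.1, if_neg hm.2]
      simp
    rw [this]
    simp
end
end

section
/- Assume the loss has the form ℓ(w,x,y) = ℓ(f_w(x),y) with values in [0,1]. Then the super-sample class-generalization error of class y satisfies |gen_y| ≤ E_{Z_{[2n]}}[(1/n^y) Σ_{i=1}^n sqrt(2·max(𝟙{Y_i^-=y}, 𝟙{Y_i^+=y})·I_{Z_{[2n]}}(L_i^±;U_i))]. -/
open MeasureTheory ProbabilityTheory
open scoped ENNReal

noncomputable section

instance coin_prob : IsProbabilityMeasure coin := by
  constructor
  simp [coin, ENNReal.inv_two_add_inv_two]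

/-- Clamping of a real number to the unit interval. -/
def clip (x : ℝ) : ℝ := max 0 (min x 1)

lemma clip_mem (x : ℝ) : 0 ≤ clip x ∧ clip x ≤ 1 := by
  constructor <;> simp [clip]

lemma clip_eq {x : ℝ} (h : x ∈ Set.Icc (0 : ℝ) 1) : clip x = x := by
  simp [clip, h.1, h.2]

lemma measurable_clip : Measurable clip := by
  unfold clip; fun_prop

/-- The signed indicator weighted loss difference (test minus train). -/
def gfun (c₁ c₂ : ℝ) (p : (ℝ × ℝ) × Bool) : ℝ :=
  (if p.2 = true then 1 else -1) * (c₁ * clip p.1.1 - c₂ * clip p.1.2)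

lemma hfun_abs {c₁ c₂ : ℝ} (h₁ : c₁ ∈ Set.Icc (0 : ℝ) 1) (h₂ : c₂ ∈ Set.Icc (0 : ℝ) 1)
    (a b : ℝ) : |c₁ * clip a - c₂ * clip b| ≤ 1 := by
  have ha := clip_mem a
  have hb := clip_mem b
  rw [abs_le]
  constructor <;> nlinarith [h₁.1, h₁.2, h₂.1, h₂.2, mul_nonneg h₁.1 ha.1, mul_nonneg h₂.1 hb.1]

lemma gfun_abs {c₁ c₂ : ℝ} (h₁ : c₁ ∈ Set.Icc (0 : ℝ) 1) (h₂ : c₂ ∈ Set.Icc (0 : ℝ) 1)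
    (p : (ℝ × ℝ) × Bool) : |gfun c₁ c₂ p| ≤ 1 := by
  have := hfun_abs h₁ h₂ p.1.1 p.1.2
  unfold gfun
  split_ifs
  · simpa using this
  · rw [neg_one_mul, abs_neg]; exact this

lemma measurable_gfun {γ : Type*} [MeasurableSpace γ] {c₁ c₂ : γ → ℝ} {p : γ → (ℝ × ℝ) × Bool}
    (h₁ : Measurable c₁) (h₂ : Measurable c₂) (hp : Measurable p) :
    Measurable fun x => gfun (c₁ x) (c₂ x) (p x) := by
  unfold gfun
  refine Measurable.mul ?_ ?_
  · refine Measurable.ite ?_ measurable_const measurable_const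
    exact hp.snd (measurableSet_singleton true)
  · exact (h₁.mul (measurable_clip.comp hp.fst.fst)).sub (h₂.mul (measurable_clip.comp hp.fst.snd))

/-- One side of the Donsker-Varadhan variational formula. -/
lemma dv {α : Type*} [MeasurableSpace α] (P Q : Measure α) [IsProbabilityMeasure P]
    [IsProbabilityMeasure Q] (hPQ : P ≪ Q) (hint : Integrable (llr P Q) P) (g : α → ℝ)
    (hgP : Integrable g P) (hgQ : Integrable (fun x => Real.exp (g x)) Q) :
    ∫ x, g x ∂P ≤ ∫ x, llr P Q x ∂P + Real.log (∫ x, Real.exp (g x) ∂Q) := by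
  have h := integral_llr_tilted_right hPQ hgP hgQ hint
  have hp := isProbabilityMeasure_tilted hgQ
  have h2 := InformationTheory.integral_llr_add_mul_log_nonneg (μ := P) (ν := Q.tilted g)
    (hPQ.trans (absolutelyContinuous_tilted hgQ)) (integrable_llr_tilted_right hPQ hgP hint hgQ)
  simp at h2
  linarith

lemma mgf_bound {c₁ c₂ : ℝ} (h₁ : c₁ ∈ Set.Icc (0 : ℝ) 1) (h₂ : c₂ ∈ Set.Icc (0 : ℝ) 1)
    (ν : Measure (ℝ × ℝ)) [IsProbabilityMeasure ν] (t : ℝ) :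
    Integrable (fun p => Real.exp (t * gfun c₁ c₂ p)) (ν.prod coin) ∧
    ∫ p, Real.exp (t * gfun c₁ c₂ p) ∂(ν.prod coin) ≤ Real.exp (t ^ 2 / 2) := by
  have hm : Measurable (gfun c₁ c₂) :=
    measurable_gfun measurable_const measurable_const measurable_id
  have hi : Integrable (fun p => Real.exp (t * gfun c₁ c₂ p)) (ν.prod coin) := by
    refine Integrable.of_bound (C := Real.exp |t|) (by fun_prop) (.of_forall fun p => ?_)
    rw [Real.norm_eq_abs, Real.abs_exp, Real.exp_le_exp]
    refine (le_abs_self _).trans ?_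
    rw [abs_mul]
    exact mul_le_of_le_one_right (abs_nonneg _) (gfun_abs h₁ h₂ p)
  refine ⟨hi, ?_⟩
  rw [integral_prod _ hi]
  have hb : ∀ a : ℝ × ℝ, ∫ u, Real.exp (t * gfun c₁ c₂ (a, u)) ∂coin ≤ Real.exp (t ^ 2 / 2) := by
    intro a
    rw [integral_coin]
    have h := hfun_abs h₁ h₂ a.1 a.2
    simp only [gfun]
    set d := c₁ * clip a.1 - c₂ * clip a.2
    have hc := Real.cosh_le_exp_half_sq (t * d)
    rw [Real.cosh_eq] at hc
    simp only [if_true, Bool.false_eq_true, if_false, one_mul, neg_mul, mul_neg]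
    refine hc.trans (Real.exp_le_exp.2 ?_)
    have : d ^ 2 ≤ 1 := by rw [sq_le_one_iff_abs_le_one]; exact h
    nlinarith [sq_nonneg t, mul_nonneg (sq_nonneg t) (sub_nonneg.2 this)]
  calc _ ≤ ∫ _ : ℝ × ℝ, Real.exp (t ^ 2 / 2) ∂ν :=
        integral_mono hi.integral_prod_left (integrable_const _) hb
    _ = _ := by simp

lemma kl_bound {c₁ c₂ : ℝ} (h₁ : c₁ ∈ Set.Icc (0 : ℝ) 1) (h₂ : c₂ ∈ Set.Icc (0 : ℝ) 1)
    (P : Measure ((ℝ × ℝ) × Bool)) [IsProbabilityMeasure P]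
    (ν : Measure (ℝ × ℝ)) [IsProbabilityMeasure ν] :
    ENNReal.ofReal |∫ p, gfun c₁ c₂ p ∂P| ≤ (2 * KL P (ν.prod coin)) ^ (1 / 2 : ℝ) := by
  unfold KL
  split_ifs with h
  · set t := ∫ p, gfun c₁ c₂ p ∂P with ht
    have hm : Measurable (gfun c₁ c₂) :=
      measurable_gfun measurable_const measurable_const measurable_id
    have hg : Integrable (gfun c₁ c₂) P :=
      Integrable.of_bound (C := 1) (by fun_prop) (.of_forall fun p => gfun_abs h₁ h₂ p)
    obtain ⟨hi, hb⟩ := mgf_bound h₁ h₂ ν t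
    have hdv := dv P (ν.prod coin) h.1 h.2 (fun p => t * gfun c₁ c₂ p) (hg.const_mul t) hi
    rw [integral_const_mul, ← ht] at hdv
    have hlog : Real.log (∫ p, Real.exp (t * gfun c₁ c₂ p) ∂(ν.prod coin)) ≤ t ^ 2 / 2 :=
      (Real.log_le_iff_le_exp (integral_exp_pos hi)).2 hb
    set K := ∫ x, llr P (ν.prod coin) x ∂P
    have hK : t ^ 2 ≤ 2 * K := by nlinarith
    have h2 : (2 : ℝ≥0∞) = ENNReal.ofReal 2 := by simp
    have hK0 : 0 ≤ 2 * K := (sq_nonneg t).trans hK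
    rw [h2, ← ENNReal.ofReal_mul (by norm_num), ENNReal.ofReal_rpow_of_nonneg hK0 (by norm_num)]
    refine ENNReal.ofReal_le_ofReal ?_
    rw [← Real.sqrt_eq_rpow]
    exact Real.abs_le_sqrt hK
  · simp

lemma condDistrib_coin {Ω γ : Type*} [MeasurableSpace Ω] [MeasurableSpace γ]
    (μ : Measure Ω) [IsProbabilityMeasure μ] (n : ℕ) (Z : Ω → γ) (hZ : Measurable Z)
    (U : Ω → Fin n → Bool) (hU : Measurable U) (M : Measure γ) [IsProbabilityMeasure M]
    (hlaw : μ.map (fun ω => (Z ω, U ω)) = M.prod (Measure.pi fun _ : Fin n => coin)) (i : Fin n) :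
    ∀ᵐ z ∂(μ.map Z), condDistrib (fun ω => U ω i) Z μ z = coin := by
  have hUi : Measurable fun ω => U ω i := (measurable_pi_apply i).comp hU
  have hM : μ.map Z = M := by
    have : μ.map Z = (μ.map (fun ω => (Z ω, U ω))).map Prod.fst := by
      rw [Measure.map_map measurable_fst (hZ.prodMk hU)]; rfl
    rw [this, hlaw]
    simp
  have hj : μ.map (fun ω => (Z ω, U ω i)) = M.prod coin := by
    have : μ.map (fun ω => (Z ω, U ω i)) =
        (μ.map (fun ω => (Z ω, U ω))).map (Prod.map id (Function.eval i)) := by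
      rw [Measure.map_map (by fun_prop) (hZ.prodMk hU)]; rfl
    rw [this, hlaw, ← Measure.map_prod_map _ _ measurable_id (measurable_pi_apply i),
      (measurePreserving_eval (fun _ : Fin n => coin) i).map_eq, Measure.map_id]
  have := condDistrib_ae_eq_of_measure_eq_compProd (μ := μ) Z hUi.aemeasurable
    (κ := Kernel.const γ coin) (by rw [hj, hM, Measure.compProd_const])
  filter_upwards [this] with z hz
  rw [hz]; rfl

/-- **Theorem B.3 (class-e-CMI bound)**: in the super-sample setting with predictions
`f_w(x)` and a bounded loss `ℓ(f_w(x), y) ∈ [0,1]`, the class-generalization error of class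
`y` satisfies
`|gen_y| ≤ E_{Z_{[2n]}}[(1/n^y) Σ_i sqrt (2 max(𝟙{Y_i⁻=y},𝟙{Y_i⁺=y}) I_{Z_{[2n]}}(L_i^±;U_i))]`,
where `L_i^± = (ℓ(f_W(X_i⁻),Y_i⁻), ℓ(f_W(X_i⁺),Y_i⁺))` is the loss pair. -/
theorem class_eCMI_bound
    {Ω 𝒲 𝒳 𝒴 Yhat : Type*}
    [mΩ : MeasurableSpace Ω] [StandardBorelSpace Ω] [Nonempty Ω]
    [MeasurableSpace 𝒲] [StandardBorelSpace 𝒲] [Nonempty 𝒲]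
    [MeasurableSpace 𝒳] [StandardBorelSpace 𝒳]
    [MeasurableSpace 𝒴] [Countable 𝒴] [MeasurableSingletonClass 𝒴] [DecidableEq 𝒴]
    [MeasurableSpace Yhat] [StandardBorelSpace Yhat] [Nonempty Yhat]
    (μ : Measure Ω) [IsProbabilityMeasure μ]
    (n : ℕ) (hn : 0 < n)
    (PZ : Measure (𝒳 × 𝒴)) [IsProbabilityMeasure PZ]
    (Z : Ω → Fin n → (𝒳 × 𝒴) × (𝒳 × 𝒴)) (hZ : Measurable Z)
    (U : Ω → Fin n → Bool) (hU : Measurable U)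
    (W : Ω → 𝒲) (hW : Measurable W)
    (hlaw : μ.map (fun ω => (Z ω, U ω)) =
      (Measure.pi fun _ : Fin n => PZ.prod PZ).prod (Measure.pi fun _ : Fin n => coin))
    (hSle : MeasurableSpace.comap (fun ω (i : Fin n) => trainSel (Z ω i) (U ω i))
        inferInstance ≤ mΩ)
    (hMarkov : CondIndepFun
      (MeasurableSpace.comap (fun ω (i : Fin n) => trainSel (Z ω i) (U ω i)) inferInstance)
      hSle W (fun ω => (Z ω, U ω)) μ)
    -- the model prediction map and the loss on predictions
    (f : 𝒲 → 𝒳 → Yhat) (hf : Measurable fun p : 𝒲 × 𝒳 => f p.1 p.2)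
    (ℓ : Yhat → 𝒴 → ℝ) (hℓ : Measurable fun p : Yhat × 𝒴 => ℓ p.1 p.2)
    (hℓ01 : ∀ p y', ℓ p y' ∈ Set.Icc (0 : ℝ) 1)
    (y : 𝒴) (hy : 0 < PZ (Prod.snd ⁻¹' {y})) :
    ENNReal.ofReal
        |∫ ω, (1 / ((n : ℝ) * (PZ (Prod.snd ⁻¹' {y})).toReal)) *
            ∑ i, ((if (testSel (Z ω i) (U ω i)).2 = y then
                    ℓ (f (W ω) (testSel (Z ω i) (U ω i)).1) (testSel (Z ω i) (U ω i)).2 else 0) -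
                  (if (trainSel (Z ω i) (U ω i)).2 = y then
                    ℓ (f (W ω) (trainSel (Z ω i) (U ω i)).1) (trainSel (Z ω i) (U ω i)).2 else 0))
          ∂μ|
      ≤ ∫⁻ z, ENNReal.ofReal (1 / ((n : ℝ) * (PZ (Prod.snd ⁻¹' {y})).toReal)) *
            ∑ i, (2 * max (if (z i).1.2 = y then (1 : ℝ≥0∞) else 0)
                          (if (z i).2.2 = y then (1 : ℝ≥0∞) else 0) *
                  dCMI μ (fun ω => (ℓ (f (W ω) ((Z ω i).1.1)) ((Z ω i).1.2), ℓ (f (W ω) ((Z ω i).2.1)) ((Z ω i).2.2)))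
                    (fun ω => U ω i) Z z) ^ (1 / 2 : ℝ)
          ∂(μ.map Z) := by
  have hPZ : IsProbabilityMeasure (PZ.prod PZ) := inferInstance
  set C : ℝ := 1 / ((n : ℝ) * (PZ (Prod.snd ⁻¹' {y})).toReal) with hC
  have hC0 : 0 ≤ C := by positivity
  let A : Fin n → Ω → ℝ × ℝ := fun i ω =>
    (ℓ (f (W ω) ((Z ω i).1.1)) ((Z ω i).1.2), ℓ (f (W ω) ((Z ω i).2.1)) ((Z ω i).2.2))
  let c₁ : Fin n → (Fin n → (𝒳 × 𝒴) × (𝒳 × 𝒴)) → ℝ := fun i z => if (z i).1.2 = y then 1 else 0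
  let c₂ : Fin n → (Fin n → (𝒳 × 𝒴) × (𝒳 × 𝒴)) → ℝ := fun i z => if (z i).2.2 = y then 1 else 0
  have hc₁ : ∀ i z, c₁ i z ∈ Set.Icc (0 : ℝ) 1 := by
    intro i z; simp only [c₁]; split_ifs <;> simp
  have hc₂ : ∀ i z, c₂ i z ∈ Set.Icc (0 : ℝ) 1 := by
    intro i z; simp only [c₂]; split_ifs <;> simp
  have hc₁m : ∀ i, Measurable (c₁ i) := fun i =>
    Measurable.ite ((measurable_pi_apply i).fst.snd (measurableSet_singleton y))
      measurable_const measurable_const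
  have hc₂m : ∀ i, Measurable (c₂ i) := fun i =>
    Measurable.ite ((measurable_pi_apply i).snd.snd (measurableSet_singleton y))
      measurable_const measurable_const
  have hZi : ∀ i, Measurable fun ω => Z ω i := fun i => (measurable_pi_apply i).comp hZ
  have hUi : ∀ i, Measurable fun ω => U ω i := fun i => (measurable_pi_apply i).comp hU
  have hAm : ∀ i, Measurable (A i) := by
    intro i
    refine Measurable.prodMk ?_ ?_
    · exact hℓ.comp ((hf.comp (hW.prodMk (hZi i).fst.fst)).prodMk (hZi i).fst.snd)
    · exact hℓ.comp ((hf.comp (hW.prodMk (hZi i).snd.fst)).prodMk (hZi i).snd.snd)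
  let κ := fun i => condDistrib (fun ω => (A i ω, U ω i)) Z μ
  let H : Fin n → (Fin n → (𝒳 × 𝒴) × (𝒳 × 𝒴)) → ℝ := fun i z =>
    ∫ p, gfun (c₁ i z) (c₂ i z) p ∂(κ i z)
  -- the integrand in terms of `gfun`
  have hpt : ∀ i ω, ((if (testSel (Z ω i) (U ω i)).2 = y then
          ℓ (f (W ω) (testSel (Z ω i) (U ω i)).1) (testSel (Z ω i) (U ω i)).2 else 0) -
        (if (trainSel (Z ω i) (U ω i)).2 = y then
          ℓ (f (W ω) (trainSel (Z ω i) (U ω i)).1) (trainSel (Z ω i) (U ω i)).2 else 0))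
      = gfun (c₁ i (Z ω)) (c₂ i (Z ω)) (A i ω, U ω i) := by
    intro i ω
    simp only [gfun, A, c₁, c₂, testSel, trainSel]
    rw [clip_eq (hℓ01 _ _), clip_eq (hℓ01 _ _)]
    cases U ω i <;> simp
  have hpm : IsProbabilityMeasure (μ.map Z) := Measure.isProbabilityMeasure_map hZ.aemeasurable
  have hGm : ∀ i, Measurable fun q : (Fin n → (𝒳 × 𝒴) × (𝒳 × 𝒴)) × ((ℝ × ℝ) × Bool) =>
      gfun (c₁ i q.1) (c₂ i q.1) q.2 := fun i =>
    measurable_gfun ((hc₁m i).comp measurable_fst) ((hc₂m i).comp measurable_fst) measurable_snd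
  have hGi : ∀ i, Integrable (fun q : (Fin n → (𝒳 × 𝒴) × (𝒳 × 𝒴)) × ((ℝ × ℝ) × Bool) =>
      gfun (c₁ i q.1) (c₂ i q.1) q.2) (μ.map Z ⊗ₘ κ i) := fun i =>
    Integrable.of_bound (C := 1) (hGm i).aestronglyMeasurable
      (.of_forall fun p => gfun_abs (hc₁ i _) (hc₂ i _) _)
  have hHi : ∀ i, Integrable (H i) (μ.map Z) := by
    intro i
    have h := hGi i
    rw [Measure.compProd] at h
    have h' := Integrable.integral_compProd h
    simp only [Kernel.prodMkLeft_apply, Kernel.const_apply] at h'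
    exact h'
  have hint : ∀ i, ∫ ω, gfun (c₁ i (Z ω)) (c₂ i (Z ω)) (A i ω, U ω i) ∂μ
      = ∫ z, H i z ∂(μ.map Z) := by
    intro i
    rw [← Measure.integral_compProd (hGi i),
      compProd_map_condDistrib ((hAm i).prodMk (hUi i)).aemeasurable,
      integral_map (hZ.prodMk ((hAm i).prodMk (hUi i))).aemeasurable
        (hGm i).aestronglyMeasurable]
  have hgi : ∀ i, Integrable (fun ω => gfun (c₁ i (Z ω)) (c₂ i (Z ω)) (A i ω, U ω i)) μ := fun i =>
    Integrable.of_bound (C := 1)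
      ((hGm i).comp (hZ.prodMk ((hAm i).prodMk (hUi i)))).aestronglyMeasurable
      (.of_forall fun p => gfun_abs (hc₁ i _) (hc₂ i _) _)
  have hmain : ∫ ω, C * ∑ i, gfun (c₁ i (Z ω)) (c₂ i (Z ω)) (A i ω, U ω i) ∂μ
      = ∫ z, C * ∑ i, H i z ∂(μ.map Z) := by
    rw [integral_const_mul, integral_const_mul, integral_finsetSum _ (fun i _ => hgi i),
      integral_finsetSum _ (fun i _ => hHi i)]
    simp_rw [hint]
  simp_rw [hpt]
  rw [hmain, ← Real.norm_eq_abs, ofReal_norm]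
  refine (enorm_integral_le_lintegral_enorm _).trans (lintegral_mono_ae ?_)
  have hcoin : ∀ᵐ z ∂(μ.map Z), ∀ i, condDistrib (fun ω => U ω i) Z μ z = coin :=
    ae_all_iff.2 fun i => condDistrib_coin μ n Z hZ U hU _ hlaw i
  filter_upwards [hcoin] with z hz
  rw [enorm_mul, Real.enorm_of_nonneg hC0]
  refine mul_le_mul_right ?_ _
  refine (enorm_sum_le _ _).trans (Finset.sum_le_sum fun i _ => ?_)
  rw [← ofReal_norm, Real.norm_eq_abs]
  unfold dCMI
  rw [hz i]
  have hk := kl_bound (hc₁ i z) (hc₂ i z) (κ i z) (condDistrib (A i) Z μ z)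
  by_cases h1 : (z i).1.2 = y
  · have : max (if (z i).1.2 = y then (1 : ℝ≥0∞) else 0) (if (z i).2.2 = y then (1 : ℝ≥0∞) else 0)
        = 1 := by split_ifs <;> simp
    rw [this, mul_one]
    exact hk
  · by_cases h2 : (z i).2.2 = y
    · rw [if_neg h1, if_pos h2, max_eq_right zero_le_one, mul_one]
      exact hk
    · have : H i z = 0 := by simp [H, c₁, c₂, h1, h2, gfun]
      rw [this]; simp
end
end

section
/- Assume the loss has the form ℓ(w,x,y) = ℓ(f_w(x),y) with values in [0,1]. Then the super-sample class-generalization error of class y satisfies |gen_y| ≤ E_{Z_{[2n]}}[(1/n^y) Σ_{i=1}^n sqrt(2·I_{Z_{[2n]}}(Δ_yL_i;U_i))]. -/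
open MeasureTheory ProbabilityTheory
open scoped ENNReal

noncomputable section

open Real in
lemma aux_mgf (α : Measure ℝ) [IsProbabilityMeasure α] (t : ℝ) (g : ℝ × Bool → ℝ)
    (c : ℝ → ℝ) (hc : Measurable c) (hc1 : ∀ a, |c a| ≤ 1)
    (hg : ∀ p, g p = (if p.2 then 1 else -1) * c p.1)
    (hint : Integrable (fun p => exp (t * g p)) (α.prod coin)) :
    ∫ p, exp (t * g p) ∂(α.prod coin) ≤ exp (t ^ 2 / 2) := by
  have : IsProbabilityMeasure coin := ⟨by simp [coin, ENNReal.inv_two_add_inv_two]⟩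
  rw [integral_prod _ hint]
  have key : ∀ a, ∫ u, exp (t * g (a, u)) ∂coin ≤ exp (t ^ 2 / 2) := by
    intro a
    have h1 : ∫ u, exp (t * g (a, u)) ∂coin = cosh (t * c a) := by
      unfold coin
      have hfin : ∀ b : Bool, IsFiniteMeasure ((2 : ℝ≥0∞)⁻¹ • Measure.dirac b) :=
        fun b => ⟨by simp⟩
      have h1 := hfin true
      have h2 := hfin false
      rw [integral_add_measure (Integrable.of_finite) (Integrable.of_finite),
        integral_smul_measure, integral_smul_measure]
      simp [hg, cosh_eq]
      ring
    rw [h1]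
    refine (cosh_le_exp_half_sq _).trans (exp_le_exp.2 ?_)
    have : (t * c a) ^ 2 ≤ t ^ 2 := by
      rw [mul_pow]
      have := (sq_le_one_iff_abs_le_one (c a)).2 (hc1 a)
      nlinarith [sq_nonneg t]
    linarith
  calc _ ≤ ∫ a, exp (t ^ 2 / 2) ∂α :=
        integral_mono hint.integral_prod_left (integrable_const _) key
    _ = _ := by simp

lemma aux_dv {β : Type*} [MeasurableSpace β] (ρ ν : Measure β) [IsProbabilityMeasure ρ]
    [IsProbabilityMeasure ν] (g : β → ℝ) (hg : Measurable g) (hg1 : ∀ p, |g p| ≤ 1)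
    (hm : ∀ t : ℝ, ∫ p, Real.exp (t * g p) ∂ν ≤ Real.exp (t ^ 2 / 2)) :
    ENNReal.ofReal |∫ p, g p ∂ρ| ≤ (2 * KL ρ ν) ^ (1 / 2 : ℝ) := by
  unfold KL
  split_ifs with h
  swap
  · simp
  obtain ⟨hac, hint⟩ := h
  set m := ∫ p, g p ∂ρ with hmdef
  have hgi : Integrable (fun p => m * g p) ρ :=
    (Integrable.of_bound hg.aestronglyMeasurable 1 (Filter.Eventually.of_forall hg1)).const_mul m
  have hei : Integrable (fun p => Real.exp (m * g p)) ν := by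
    refine Integrable.of_bound (by fun_prop) (Real.exp |m|) (Filter.Eventually.of_forall fun p => ?_)
    rw [Real.norm_eq_abs, Real.abs_exp]
    refine Real.exp_le_exp.2 ((le_abs_self _).trans ?_)
    rw [abs_mul]
    exact mul_le_of_le_one_right (abs_nonneg _) (hg1 p)
  have e := integral_llr_tilted_right hac hgi hei hint
  have := isProbabilityMeasure_tilted hei
  have nn := InformationTheory.integral_llr_add_sub_measure_univ_nonneg
    (hac.trans (absolutelyContinuous_tilted hei)) (integrable_llr_tilted_right hac hgi hint hei)
  simp only [probReal_univ, add_sub_cancel_right] at nn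
  rw [e, integral_const_mul, ← hmdef] at nn
  have hl : Real.log (∫ p, Real.exp (m * g p) ∂ν) ≤ m ^ 2 / 2 := by
    rw [Real.log_le_iff_le_exp (integral_exp_pos hei)]
    exact hm m
  have hk : m ^ 2 ≤ 2 * ∫ x, llr ρ ν x ∂ρ := by nlinarith
  rw [show (2 : ℝ≥0∞) = ENNReal.ofReal 2 by simp, ← ENNReal.ofReal_mul (by norm_num),
    ENNReal.ofReal_rpow_of_nonneg ((sq_nonneg m).trans hk) (by norm_num)]
  apply ENNReal.ofReal_le_ofReal
  rw [← Real.sqrt_eq_rpow]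
  exact Real.abs_le_sqrt hk

lemma aux_main {Ω γ : Type*} [MeasurableSpace Ω] [MeasurableSpace γ]
    (μ : Measure Ω) [IsProbabilityMeasure μ] (Z : Ω → γ) (hZ : Measurable Z)
    (n : ℕ) (U : Ω → Fin n → Bool) (hU : Measurable U) (P : Measure γ) [IsProbabilityMeasure P]
    (hlaw : μ.map (fun ω => (Z ω, U ω)) = P.prod (Measure.pi fun _ : Fin n => coin))
    (A : Fin n → Ω → ℝ) (hA : ∀ i, Measurable (A i)) (hA1 : ∀ i ω, |A i ω| ≤ 1)
    (k : ℝ) (hk : 0 ≤ k) :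
    ENNReal.ofReal |∫ ω, k * ∑ i, (if U ω i then 1 else -1) * A i ω ∂μ| ≤
      ∫⁻ z, ENNReal.ofReal k * ∑ i, (2 * dCMI μ (A i) (fun ω => U ω i) Z z) ^ (1 / 2 : ℝ)
        ∂(μ.map Z) := by
  have : IsProbabilityMeasure coin := ⟨by simp [coin, ENNReal.inv_two_add_inv_two]⟩
  have hUi : ∀ i, Measurable fun ω => U ω i := fun i => (measurable_pi_apply i).comp hU
  let c : ℝ → ℝ := fun a => max (-1) (min 1 a)
  have hc : Measurable c := by fun_prop
  have hc1 : ∀ a, |c a| ≤ 1 := fun a => abs_le.2 ⟨le_max_left _ _, by simp [c]⟩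
  have hcA : ∀ i ω, c (A i ω) = A i ω := fun i ω => by
    have := abs_le.1 (hA1 i ω)
    simp [c, min_eq_right this.2, this.1]
  let g : ℝ × Bool → ℝ := fun p => (if p.2 then 1 else -1) * c p.1
  have hsg : Measurable fun b : Bool => (if b then (1:ℝ) else -1) := measurable_of_finite _
  have hg : Measurable g := (hsg.comp measurable_snd).mul (hc.comp measurable_fst)
  have hg1 : ∀ p, |g p| ≤ 1 := by
    rintro ⟨a, b⟩
    cases b <;> simpa [g] using hc1 a
  have hmZ : μ.map Z = P := by
    have : μ.map Z = (μ.map (fun ω => (Z ω, U ω))).map Prod.fst := by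
      rw [Measure.map_map measurable_fst (by fun_prop)]; rfl
    rw [this, hlaw, Measure.map_fst_prod]; simp
  have hcoin : ∀ i, ∀ᵐ z ∂(μ.map Z), condDistrib (fun ω => U ω i) Z μ z = coin := by
    intro i
    have := condDistrib_ae_eq_of_measure_eq_compProd (μ := μ) Z (hUi i).aemeasurable
      (κ := Kernel.const γ coin) ?_
    · filter_upwards [this] with z hz
      rw [hz, Kernel.const_apply]
    · rw [Measure.compProd_const, hmZ]
      have h2 : μ.map (fun ω => (Z ω, U ω i)) =
          (μ.map (fun ω => (Z ω, U ω))).map (Prod.map id (Function.eval i)) := by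
        rw [Measure.map_map (by fun_prop) (by fun_prop)]; rfl
      rw [h2, hlaw, ← Measure.map_prod_map _ _ measurable_id (by fun_prop), Measure.map_id,
        Measure.pi_map_eval]
      simp only [measure_univ, Finset.prod_const_one, one_smul]
  have hgi : ∀ i, Integrable (fun q : γ × (ℝ × Bool) => g q.2)
      (μ.map (fun ω => (Z ω, (A i ω, U ω i)))) := fun i => by
    have hmm : Measurable (fun ω => (Z ω, (A i ω, U ω i))) := hZ.prodMk ((hA i).prodMk (hUi i))
    have := Measure.isProbabilityMeasure_map (μ := μ) hmm.aemeasurable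
    exact Integrable.of_bound (hg.comp measurable_snd).aestronglyMeasurable 1
      (Filter.Eventually.of_forall fun q => hg1 q.2)
  have hterm : ∀ i, ∫ ω, (if U ω i then 1 else -1) * A i ω ∂μ =
      ∫ z, ∫ p, g p ∂(condDistrib (fun ω => (A i ω, U ω i)) Z μ z) ∂(μ.map Z) := by
    intro i
    have hp : Measurable (fun ω => (A i ω, U ω i)) := (hA i).prodMk (hUi i)
    have h := hgi i
    rw [← compProd_map_condDistrib hp.aemeasurable] at h
    have h3 := Measure.integral_compProd h
    rw [← h3, compProd_map_condDistrib hp.aemeasurable,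
      integral_map (f := fun q : γ × (ℝ × Bool) => g q.2) (hZ.prodMk hp).aemeasurable
        (hg.comp measurable_snd).aestronglyMeasurable]
    simp [g, hcA]
  have hti : ∀ i, Integrable (fun ω => (if U ω i then 1 else -1) * A i ω) μ := by
    intro i
    refine Integrable.of_bound ((hsg.comp (hUi i)).mul (hA i)).aestronglyMeasurable 1
      (Filter.Eventually.of_forall fun ω => ?_)
    have := hg1 (A i ω, U ω i)
    simpa [g, hcA] using this
  have hii : ∀ i, Integrable
      (fun z => ∫ p, g p ∂(condDistrib (fun ω => (A i ω, U ω i)) Z μ z)) (μ.map Z) := fun i =>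
    (hgi i).integral_condDistrib_map ((hA i).prodMk (hUi i)).aemeasurable
  rw [integral_const_mul, integral_finsetSum _ fun i _ => hti i]
  simp_rw [hterm]
  rw [← integral_finsetSum _ fun i _ => hii i, ← integral_const_mul, ← Real.norm_eq_abs,
    ofReal_norm]
  refine (enorm_integral_le_lintegral_enorm _).trans (lintegral_mono_ae ?_)
  filter_upwards [ae_all_iff.2 hcoin] with z hz
  rw [enorm_mul, Real.enorm_of_nonneg hk]
  gcongr
  refine (enorm_sum_le _ _).trans (Finset.sum_le_sum fun i _ => ?_)
  rw [← ofReal_norm, Real.norm_eq_abs]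
  unfold dCMI
  rw [hz i]
  refine aux_dv _ _ g hg hg1 fun t => aux_mgf _ t g c hc hc1 (fun _ => rfl) ?_
  refine Integrable.of_bound (by fun_prop) (Real.exp |t|) (Filter.Eventually.of_forall fun p => ?_)
  rw [Real.norm_eq_abs, Real.abs_exp]
  refine Real.exp_le_exp.2 ((le_abs_self _).trans ?_)
  rw [abs_mul]
  exact mul_le_of_le_one_right (abs_nonneg _) (hg1 p)

/-- **Theorem 4 (class-Δ_yL-CMI bound)**: in the super-sample setting with predictions
`f_w(x)` and a bounded loss `ℓ(f_w(x), y) ∈ [0,1]`, the class-generalization error of class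
`y` satisfies `|gen_y| ≤ E_{Z_{[2n]}}[(1/n^y) Σ_i sqrt (2 I_{Z_{[2n]}}(Δ_yL_i;U_i))]`, where
`Δ_yL_i = 𝟙{Y_i⁻=y} ℓ(f_W(X_i⁻),Y_i⁻) − 𝟙{Y_i⁺=y} ℓ(f_W(X_i⁺),Y_i⁺)`. -/
theorem class_deltaL_CMI_bound
    {Ω 𝒲 𝒳 𝒴 Yhat : Type*}
    [mΩ : MeasurableSpace Ω] [StandardBorelSpace Ω] [Nonempty Ω]
    [MeasurableSpace 𝒲] [StandardBorelSpace 𝒲] [Nonempty 𝒲]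
    [MeasurableSpace 𝒳] [StandardBorelSpace 𝒳]
    [MeasurableSpace 𝒴] [Countable 𝒴] [MeasurableSingletonClass 𝒴] [DecidableEq 𝒴]
    [MeasurableSpace Yhat] [StandardBorelSpace Yhat] [Nonempty Yhat]
    (μ : Measure Ω) [IsProbabilityMeasure μ]
    (n : ℕ) (hn : 0 < n)
    (PZ : Measure (𝒳 × 𝒴)) [IsProbabilityMeasure PZ]
    (Z : Ω → Fin n → (𝒳 × 𝒴) × (𝒳 × 𝒴)) (hZ : Measurable Z)
    (U : Ω → Fin n → Bool) (hU : Measurable U)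
    (W : Ω → 𝒲) (hW : Measurable W)
    (hlaw : μ.map (fun ω => (Z ω, U ω)) =
      (Measure.pi fun _ : Fin n => PZ.prod PZ).prod (Measure.pi fun _ : Fin n => coin))
    (hSle : MeasurableSpace.comap (fun ω (i : Fin n) => trainSel (Z ω i) (U ω i))
        inferInstance ≤ mΩ)
    (hMarkov : CondIndepFun
      (MeasurableSpace.comap (fun ω (i : Fin n) => trainSel (Z ω i) (U ω i)) inferInstance)
      hSle W (fun ω => (Z ω, U ω)) μ)
    -- the model prediction map and the loss on predictions
    (f : 𝒲 → 𝒳 → Yhat) (hf : Measurable fun p : 𝒲 × 𝒳 => f p.1 p.2)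
    (ℓ : Yhat → 𝒴 → ℝ) (hℓ : Measurable fun p : Yhat × 𝒴 => ℓ p.1 p.2)
    (hℓ01 : ∀ p y', ℓ p y' ∈ Set.Icc (0 : ℝ) 1)
    (y : 𝒴) (hy : 0 < PZ (Prod.snd ⁻¹' {y})) :
    ENNReal.ofReal
        |∫ ω, (1 / ((n : ℝ) * (PZ (Prod.snd ⁻¹' {y})).toReal)) *
            ∑ i, ((if (testSel (Z ω i) (U ω i)).2 = y then
                    ℓ (f (W ω) (testSel (Z ω i) (U ω i)).1) (testSel (Z ω i) (U ω i)).2 else 0) -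
                  (if (trainSel (Z ω i) (U ω i)).2 = y then
                    ℓ (f (W ω) (trainSel (Z ω i) (U ω i)).1) (trainSel (Z ω i) (U ω i)).2 else 0))
          ∂μ|
      ≤ ∫⁻ z, ENNReal.ofReal (1 / ((n : ℝ) * (PZ (Prod.snd ⁻¹' {y})).toReal)) *
            ∑ i, (2 *
                  dCMI μ
                    (fun ω =>
                      (if (Z ω i).1.2 = y then ℓ (f (W ω) ((Z ω i).1.1)) ((Z ω i).1.2) else 0) -
                        (if (Z ω i).2.2 = y then ℓ (f (W ω) ((Z ω i).2.1)) ((Z ω i).2.2) else 0))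
                    (fun ω => U ω i) Z z) ^ (1 / 2 : ℝ)
          ∂(μ.map Z) := by
  have hmeas : ∀ i, Measurable fun ω =>
      (if (Z ω i).1.2 = y then ℓ (f (W ω) ((Z ω i).1.1)) ((Z ω i).1.2) else 0) -
        (if (Z ω i).2.2 = y then ℓ (f (W ω) ((Z ω i).2.1)) ((Z ω i).2.2) else 0) := by
    intro i
    have hZi : Measurable fun ω => Z ω i := (measurable_pi_apply i).comp hZ
    have hl : ∀ V : Ω → 𝒳 × 𝒴, Measurable V →
        Measurable fun ω => if (V ω).2 = y then ℓ (f (W ω) (V ω).1) (V ω).2 else 0 := by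
      intro V hV
      refine Measurable.ite (hV.snd (measurableSet_singleton y)) ?_ measurable_const
      exact hℓ.comp ((hf.comp (hW.prodMk hV.fst)).prodMk hV.snd)
    exact (hl _ hZi.fst).sub (hl _ hZi.snd)
  have key := aux_main μ Z hZ n U hU _ hlaw _ hmeas (fun i ω => by
    have h1 := hℓ01 (f (W ω) ((Z ω i).1.1)) ((Z ω i).1.2)
    have h2 := hℓ01 (f (W ω) ((Z ω i).2.1)) ((Z ω i).2.2)
    rw [abs_le]
    split_ifs <;> constructor <;> linarith [h1.1, h1.2, h2.1, h2.2])
    (1 / ((n : ℝ) * (PZ (Prod.snd ⁻¹' {y})).toReal)) (by positivity)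
  refine le_trans (le_of_eq ?_) key
  congr 3
  funext ω
  congr 1
  refine Finset.sum_congr rfl fun i _ => ?_
  cases U ω i <;> simp [testSel, trainSel]
end
end

section
/- Assume the loss has the form ℓ(w,x,y) = ℓ(f_w(x),y) with values in [0,1]. Then for P_{Z_{[2n]}}-almost every realization z of Z_{[2n]} (with labels y_i^±) and every i ∈ {1,…,n}: I_z(Δ_yL_i;U_i) ≤ max(𝟙{y_i^-=y}, 𝟙{y_i^+=y})·I_z(f_W(X_i^±);U_i) ≤ max(𝟙{y_i^-=y}, 𝟙{y_i^+=y})·I_z(W;U_i). Consequently, the class-Δ_yL-CMI bound E_{Z_{[2n]}}[(1/n^y) Σ_i sqrt(2·I_{Z_{[2n]}}(Δ_yL_i;U_i))] is at most the class-f-CMI bound E_{Z_{[2n]}}[(1/n^y) Σ_i sqrt(2·max(𝟙{Y_i^-=y},𝟙{Y_i^+=y})·I_{Z_{[2n]}}(f_W(X_i^±);U_i))], which in turn is at most the class-CMI bound E_{Z_{[2n]}}[(1/n^y) Σ_i sqrt(2·max(𝟙{Y_i^-=y},𝟙{Y_i^+=y})·I_{Z_{[2n]}}(W;U_i))]. 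-/
open MeasureTheory ProbabilityTheory
open scoped ENNReal

noncomputable section

lemma KL_eq_klDiv {α : Type*} [MeasurableSpace α] (μ ν : Measure α)
    [IsProbabilityMeasure μ] [IsProbabilityMeasure ν] :
    KL μ ν = InformationTheory.klDiv μ ν := by
  rw [KL, InformationTheory.klDiv_def]
  simp

lemma condDistrib_dep_map {Ω γ α β : Type*} [MeasurableSpace Ω] [MeasurableSpace γ]
    [MeasurableSpace α] [StandardBorelSpace α] [Nonempty α]
    [MeasurableSpace β] [StandardBorelSpace β] [Nonempty β]
    (μ : Measure Ω) [IsFiniteMeasure μ]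
    (V : Ω → α) (hV : Measurable V) (Z : Ω → γ) (hZ : Measurable Z)
    (g : γ → α → β) (hg : Measurable (fun p : γ × α => g p.1 p.2)) :
    ∀ᵐ z ∂(μ.map Z), condDistrib (fun ω => g (Z ω) (V ω)) Z μ z
      = (condDistrib V Z μ z).map (g z) := by
  have hκ : ∀ z, ((Kernel.id ×ₖ condDistrib V Z μ).map (fun p : γ × α => g p.1 p.2)) z
      = (condDistrib V Z μ z).map (g z) := by
    intro z
    rw [Kernel.map_apply _ hg, Kernel.prod_apply, Kernel.id_apply, Measure.dirac_prod,
      Measure.map_map hg (by fun_prop)]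
    rfl
  have key : condDistrib (fun ω => g (Z ω) (V ω)) Z μ =ᵐ[μ.map Z]
      ((Kernel.id ×ₖ condDistrib V Z μ).map (fun p : γ × α => g p.1 p.2)) := by
    have hgm : Measurable (fun ω => g (Z ω) (V ω)) := hg.comp (hZ.prodMk hV)
    have : IsMarkovKernel ((Kernel.id ×ₖ condDistrib V Z μ).map (fun p : γ × α => g p.1 p.2)) :=
      Kernel.IsMarkovKernel.map _ hg
    refine condDistrib_ae_eq_of_measure_eq_compProd Z hgm.aemeasurable ?_
    have hG : Measurable (fun p : γ × α => (p.1, g p.1 p.2)) := measurable_fst.prodMk hg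
    have h1 : μ.map (fun ω => (Z ω, g (Z ω) (V ω)))
        = (μ.map (fun ω => (Z ω, V ω))).map (fun p : γ × α => (p.1, g p.1 p.2)) := by
      rw [Measure.map_map hG (hZ.prodMk hV)]
      rfl
    rw [h1, ← compProd_map_condDistrib hV.aemeasurable]
    ext s hs
    rw [Measure.map_apply hG hs, Measure.compProd_apply (hG hs), Measure.compProd_apply hs]
    refine lintegral_congr fun z => ?_
    have hgz : Measurable (g z) := hg.comp measurable_prodMk_left
    rw [hκ, Measure.map_apply hgz (measurable_prodMk_left hs)]
    rfl
  filter_upwards [key] with z hz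
  rw [hz, hκ]

/-- Disintegrated data processing, with processing allowed to depend on the conditioning value,
together with vanishing when the processing is constant. -/
lemma dCMI_process {Ω γ α α' β : Type*} [MeasurableSpace Ω] [MeasurableSpace γ]
    [MeasurableSpace α] [StandardBorelSpace α] [Nonempty α]
    [MeasurableSpace α'] [StandardBorelSpace α'] [Nonempty α']
    [MeasurableSpace β] [StandardBorelSpace β] [Nonempty β]
    (μ : Measure Ω) [IsFiniteMeasure μ]
    (A : Ω → α) (hA : Measurable A) (B : Ω → β) (hB : Measurable B)
    (Z : Ω → γ) (hZ : Measurable Z)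
    (g : γ → α → α') (hg : Measurable (fun p : γ × α => g p.1 p.2)) :
    ∀ᵐ z ∂(μ.map Z), dCMI μ (fun ω => g (Z ω) (A ω)) B Z z ≤ dCMI μ A B Z z ∧
      ((∃ c, ∀ a, g z a = c) → dCMI μ (fun ω => g (Z ω) (A ω)) B Z z = 0) := by
  have hAB : Measurable (fun ω => (A ω, B ω)) := hA.prodMk hB
  have h1 := condDistrib_dep_map μ (fun ω => (A ω, B ω)) hAB Z hZ
    (fun z p => (g z p.1, p.2)) (by
      refine Measurable.prodMk (hg.comp (f := fun p : γ × α × β => (p.1, p.2.1)) ?_) ?_ <;> fun_prop)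
  have h2 := condDistrib_dep_map μ A hA Z hZ g hg
  have h3 := condDistrib_dep_map μ (fun ω => (A ω, B ω)) hAB Z hZ (fun _ p => p.2) (by fun_prop)
  filter_upwards [h1, h2, h3] with z h1 h2 h3
  have hgz : Measurable (g z) := hg.comp measurable_prodMk_left
  have hG : Measurable (fun p : α × β => (g z p.1, p.2)) := by fun_prop
  simp only [dCMI]
  rw [h1, h2]
  have i1 : IsProbabilityMeasure ((condDistrib (fun ω => (A ω, B ω)) Z μ z).map
    (fun p : α × β => (g z p.1, p.2))) := Measure.isProbabilityMeasure_map hG.aemeasurable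
  have i2 : IsProbabilityMeasure ((condDistrib A Z μ z).map (g z)) :=
    Measure.isProbabilityMeasure_map hgz.aemeasurable
  rw [KL_eq_klDiv, KL_eq_klDiv]
  constructor
  · have : ((condDistrib A Z μ z).map (g z)).prod (condDistrib B Z μ z)
        = ((condDistrib A Z μ z).prod (condDistrib B Z μ z)).map
          (fun p : α × β => (g z p.1, p.2)) := by
      have := Measure.map_prod_map (condDistrib A Z μ z) (condDistrib B Z μ z) hgz
        (measurable_id (α := β))
      rw [Measure.map_id] at this
      exact this
    rw [this]
    exact InformationTheory.klDiv_map_le _ _ hG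
  · rintro ⟨c, hc⟩
    have hc' : g z = fun _ => c := funext hc
    simp only [hc', Measure.map_const, measure_univ, one_smul]
    rw [h3, Measure.dirac_prod, Measure.map_map (by fun_prop) (by fun_prop)]
    exact InformationTheory.klDiv_self _

/-- **Theorem 4, comparison part**: almost surely over the super-sample and for every `i`,
`I_z(Δ_yL_i;U_i) ≤ max(𝟙{y_i⁻=y},𝟙{y_i⁺=y}) I_z(f_W(X_i^±);U_i)
  ≤ max(𝟙{y_i⁻=y},𝟙{y_i⁺=y}) I_z(W;U_i)`;
consequently the class-Δ_yL-CMI bound is at most the class-f-CMI bound, which is at most the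
class-CMI bound. -/
theorem deltaL_CMI_tighter_than_fCMI_tighter_than_CMI
    {Ω 𝒲 𝒳 𝒴 Yhat : Type*}
    [mΩ : MeasurableSpace Ω] [StandardBorelSpace Ω] [Nonempty Ω]
    [MeasurableSpace 𝒲] [StandardBorelSpace 𝒲] [Nonempty 𝒲]
    [MeasurableSpace 𝒳] [StandardBorelSpace 𝒳]
    [MeasurableSpace 𝒴] [Countable 𝒴] [MeasurableSingletonClass 𝒴] [DecidableEq 𝒴]
    [MeasurableSpace Yhat] [StandardBorelSpace Yhat] [Nonempty Yhat]
    (μ : Measure Ω) [IsProbabilityMeasure μ]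
    (n : ℕ) (hn : 0 < n)
    (PZ : Measure (𝒳 × 𝒴)) [IsProbabilityMeasure PZ]
    (Z : Ω → Fin n → (𝒳 × 𝒴) × (𝒳 × 𝒴)) (hZ : Measurable Z)
    (U : Ω → Fin n → Bool) (hU : Measurable U)
    (W : Ω → 𝒲) (hW : Measurable W)
    (hlaw : μ.map (fun ω => (Z ω, U ω)) =
      (Measure.pi fun _ : Fin n => PZ.prod PZ).prod (Measure.pi fun _ : Fin n => coin))
    (hSle : MeasurableSpace.comap (fun ω (i : Fin n) => trainSel (Z ω i) (U ω i))
        inferInstance ≤ mΩ)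
    (hMarkov : CondIndepFun
      (MeasurableSpace.comap (fun ω (i : Fin n) => trainSel (Z ω i) (U ω i)) inferInstance)
      hSle W (fun ω => (Z ω, U ω)) μ)
    (f : 𝒲 → 𝒳 → Yhat) (hf : Measurable fun p : 𝒲 × 𝒳 => f p.1 p.2)
    (ℓ : Yhat → 𝒴 → ℝ) (hℓ : Measurable fun p : Yhat × 𝒴 => ℓ p.1 p.2)
    (hℓ01 : ∀ p y', ℓ p y' ∈ Set.Icc (0 : ℝ) 1)
    (y : 𝒴) (hy : 0 < PZ (Prod.snd ⁻¹' {y})) :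
    (∀ᵐ z ∂(μ.map Z), ∀ i : Fin n,
      dCMI μ
          (fun ω =>
            (if (Z ω i).1.2 = y then ℓ (f (W ω) ((Z ω i).1.1)) ((Z ω i).1.2) else 0) -
              (if (Z ω i).2.2 = y then ℓ (f (W ω) ((Z ω i).2.1)) ((Z ω i).2.2) else 0))
          (fun ω => U ω i) Z z
        ≤ max (if (z i).1.2 = y then (1 : ℝ≥0∞) else 0)
              (if (z i).2.2 = y then (1 : ℝ≥0∞) else 0) *
            dCMI μ (fun ω => (f (W ω) ((Z ω i).1.1), f (W ω) ((Z ω i).2.1)))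
              (fun ω => U ω i) Z z
      ∧ max (if (z i).1.2 = y then (1 : ℝ≥0∞) else 0)
              (if (z i).2.2 = y then (1 : ℝ≥0∞) else 0) *
            dCMI μ (fun ω => (f (W ω) ((Z ω i).1.1), f (W ω) ((Z ω i).2.1)))
              (fun ω => U ω i) Z z
        ≤ max (if (z i).1.2 = y then (1 : ℝ≥0∞) else 0)
              (if (z i).2.2 = y then (1 : ℝ≥0∞) else 0) *
            dCMI μ W (fun ω => U ω i) Z z) ∧
    (∫⁻ z, ENNReal.ofReal (1 / ((n : ℝ) * (PZ (Prod.snd ⁻¹' {y})).toReal)) *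
          ∑ i, (2 *
                dCMI μ
                  (fun ω =>
                    (if (Z ω i).1.2 = y then ℓ (f (W ω) ((Z ω i).1.1)) ((Z ω i).1.2) else 0) -
                      (if (Z ω i).2.2 = y then ℓ (f (W ω) ((Z ω i).2.1)) ((Z ω i).2.2) else 0))
                  (fun ω => U ω i) Z z) ^ (1 / 2 : ℝ)
        ∂(μ.map Z)
      ≤ ∫⁻ z, ENNReal.ofReal (1 / ((n : ℝ) * (PZ (Prod.snd ⁻¹' {y})).toReal)) *
          ∑ i, (2 * max (if (z i).1.2 = y then (1 : ℝ≥0∞) else 0)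
                        (if (z i).2.2 = y then (1 : ℝ≥0∞) else 0) *
                dCMI μ (fun ω => (f (W ω) ((Z ω i).1.1), f (W ω) ((Z ω i).2.1)))
                  (fun ω => U ω i) Z z) ^ (1 / 2 : ℝ)
        ∂(μ.map Z)) ∧
    (∫⁻ z, ENNReal.ofReal (1 / ((n : ℝ) * (PZ (Prod.snd ⁻¹' {y})).toReal)) *
          ∑ i, (2 * max (if (z i).1.2 = y then (1 : ℝ≥0∞) else 0)
                        (if (z i).2.2 = y then (1 : ℝ≥0∞) else 0) *
                dCMI μ (fun ω => (f (W ω) ((Z ω i).1.1), f (W ω) ((Z ω i).2.1)))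
                  (fun ω => U ω i) Z z) ^ (1 / 2 : ℝ)
        ∂(μ.map Z)
      ≤ ∫⁻ z, ENNReal.ofReal (1 / ((n : ℝ) * (PZ (Prod.snd ⁻¹' {y})).toReal)) *
          ∑ i, (2 * max (if (z i).1.2 = y then (1 : ℝ≥0∞) else 0)
                        (if (z i).2.2 = y then (1 : ℝ≥0∞) else 0) *
                dCMI μ W (fun ω => U ω i) Z z) ^ (1 / 2 : ℝ)
        ∂(μ.map Z)) := by
  have main : ∀ᵐ z ∂(μ.map Z), ∀ i : Fin n,
      dCMI μ
          (fun ω =>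
            (if (Z ω i).1.2 = y then ℓ (f (W ω) ((Z ω i).1.1)) ((Z ω i).1.2) else 0) -
              (if (Z ω i).2.2 = y then ℓ (f (W ω) ((Z ω i).2.1)) ((Z ω i).2.2) else 0))
          (fun ω => U ω i) Z z
        ≤ max (if (z i).1.2 = y then (1 : ℝ≥0∞) else 0)
              (if (z i).2.2 = y then (1 : ℝ≥0∞) else 0) *
            dCMI μ (fun ω => (f (W ω) ((Z ω i).1.1), f (W ω) ((Z ω i).2.1)))
              (fun ω => U ω i) Z z
      ∧ max (if (z i).1.2 = y then (1 : ℝ≥0∞) else 0)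
              (if (z i).2.2 = y then (1 : ℝ≥0∞) else 0) *
            dCMI μ (fun ω => (f (W ω) ((Z ω i).1.1), f (W ω) ((Z ω i).2.1)))
              (fun ω => U ω i) Z z
        ≤ max (if (z i).1.2 = y then (1 : ℝ≥0∞) else 0)
              (if (z i).2.2 = y then (1 : ℝ≥0∞) else 0) *
            dCMI μ W (fun ω => U ω i) Z z := by
    rw [ae_all_iff]
    intro i
    have hUi : Measurable (fun ω => U ω i) := (measurable_pi_apply i).comp hU
    have hpair : Measurable (fun p : (Fin n → (𝒳 × 𝒴) × (𝒳 × 𝒴)) × 𝒲 =>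
        (f p.2 (p.1 i).1.1, f p.2 (p.1 i).2.1)) := by
      refine Measurable.prodMk
        (hf.comp (f := fun p : (Fin n → (𝒳 × 𝒴) × (𝒳 × 𝒴)) × 𝒲 => (p.2, (p.1 i).1.1)) ?_)
        (hf.comp (f := fun p : (Fin n → (𝒳 × 𝒴) × (𝒳 × 𝒴)) × 𝒲 => (p.2, (p.1 i).2.1)) ?_) <;>
        fun_prop
    have hF : Measurable (fun ω => (f (W ω) ((Z ω i).1.1), f (W ω) ((Z ω i).2.1))) :=
      hpair.comp (hZ.prodMk hW)
    have hg : Measurable (fun p : (Fin n → (𝒳 × 𝒴) × (𝒳 × 𝒴)) × (Yhat × Yhat) =>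
        (if (p.1 i).1.2 = y then ℓ p.2.1 (p.1 i).1.2 else 0) -
          (if (p.1 i).2.2 = y then ℓ p.2.2 (p.1 i).2.2 else 0)) := by
      refine Measurable.sub (Measurable.ite ?_ ?_ measurable_const)
        (Measurable.ite ?_ ?_ measurable_const)
      · exact (measurableSet_singleton y).preimage
          (f := fun p : (Fin n → (𝒳 × 𝒴) × (𝒳 × 𝒴)) × (Yhat × Yhat) => (p.1 i).1.2) (by fun_prop)
      · exact hℓ.comp (f := fun p : (Fin n → (𝒳 × 𝒴) × (𝒳 × 𝒴)) × (Yhat × Yhat) =>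
          (p.2.1, (p.1 i).1.2)) (by fun_prop)
      · exact (measurableSet_singleton y).preimage
          (f := fun p : (Fin n → (𝒳 × 𝒴) × (𝒳 × 𝒴)) × (Yhat × Yhat) => (p.1 i).2.2) (by fun_prop)
      · exact hℓ.comp (f := fun p : (Fin n → (𝒳 × 𝒴) × (𝒳 × 𝒴)) × (Yhat × Yhat) =>
          (p.2.2, (p.1 i).2.2)) (by fun_prop)
    have h1 := dCMI_process μ (fun ω => (f (W ω) ((Z ω i).1.1), f (W ω) ((Z ω i).2.1))) hF
      (fun ω => U ω i) hUi Z hZ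
      (fun z p => (if (z i).1.2 = y then ℓ p.1 (z i).1.2 else 0) -
          (if (z i).2.2 = y then ℓ p.2 (z i).2.2 else 0)) hg
    have h2 := dCMI_process μ W hW (fun ω => U ω i) hUi Z hZ
      (fun z w => (f w (z i).1.1, f w (z i).2.1)) hpair
    filter_upwards [h1, h2] with z h1 h2
    refine ⟨?_, mul_le_mul_right h2.1 _⟩
    by_cases ha : (z i).1.2 = y
    · rw [if_pos ha, max_eq_left (by split_ifs <;> simp), one_mul]
      exact h1.1
    by_cases hb : (z i).2.2 = y
    · rw [if_pos hb, max_eq_right (by split_ifs <;> simp), one_mul]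
      exact h1.1
    · refine le_of_eq_of_le (h1.2 ⟨0, fun a => ?_⟩) zero_le
      simp [ha, hb]
  refine ⟨main, lintegral_mono_ae ?_, lintegral_mono_ae ?_⟩
  · filter_upwards [main] with z hz
    refine mul_le_mul_right (Finset.sum_le_sum fun i _ => ?_) _
    refine ENNReal.rpow_le_rpow ?_ (by norm_num)
    rw [mul_assoc]
    exact mul_le_mul_right (hz i).1 _
  · filter_upwards [main] with z hz
    refine mul_le_mul_right (Finset.sum_le_sum fun i _ => ?_) _
    refine ENNReal.rpow_le_rpow ?_ (by norm_num)
    rw [mul_assoc, mul_assoc]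
    exact mul_le_mul_right (hz i).2 _
end
end

section
/- Assume the loss has the form ℓ(w,x,y) = ℓ(f_w(x),y) with values in [0,1]. Then the standard expected generalization error gen = E[(1/n) Σ_{i=1}^n (ℓ(W,Z_i^{−U_i}) − ℓ(W,Z_i^{U_i}))] satisfies |gen| ≤ E_{Y'~P_Y}[E_{Z_{[2n]}}[(1/n^{Y'}) Σ_{i=1}^n sqrt(2·max(𝟙{Y_i^-=Y'}, 𝟙{Y_i^+=Y'})·I_{Z_{[2n]}}(f_W(X_i^±);U_i))]]. -/
open MeasureTheory ProbabilityTheory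
open scoped ENNReal

noncomputable section

theorem aux_KL {α : Type*} [MeasurableSpace α] (μ ν : Measure α) [IsProbabilityMeasure μ]
    [IsProbabilityMeasure ν] (g : α → ℝ) (hg : Measurable g) (hb : ∀ x, g x ∈ Set.Icc (-1 : ℝ) 1)
    (h0 : ∫ x, g x ∂ν = 0) :
    ENNReal.ofReal |∫ x, g x ∂μ| ≤ (2 * KL μ ν) ^ (1 / 2 : ℝ) := by
  unfold KL
  split_ifs with h
  · obtain ⟨hac, hint⟩ := h
    set m := ∫ x, g x ∂μ with hm
    set K := ∫ x, llr μ ν x ∂μ with hK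
    have hsub := hasSubgaussianMGF_of_mem_Icc_of_integral_eq_zero (μ := ν) (X := g)
      hg.aemeasurable (ae_of_all _ hb) h0
    have hexp := hsub.integrable_exp_mul m
    have hmgf := hsub.mgf_le m
    have hgμ : Integrable (fun x => m * g x) μ :=
      (Integrable.of_mem_Icc (-1) 1 hg.aemeasurable (ae_of_all _ hb)).const_mul m
    have hprob : IsProbabilityMeasure (ν.tilted fun x => m * g x) :=
      isProbabilityMeasure_tilted hexp
    have h1 := integral_llr_tilted_right hac hgμ hexp hint
    have h2 := InformationTheory.integral_llr_add_sub_measure_univ_nonneg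
      (hac.trans (absolutelyContinuous_tilted hexp))
      (integrable_llr_tilted_right hac hgμ hint hexp)
    simp only [probReal_univ] at h2
    rw [h1, integral_const_mul, ← hm] at h2
    have h3 : Real.log (∫ x, Real.exp (m * g x) ∂ν) ≤ m ^ 2 / 2 := by
      have hpos : 0 < ∫ x, Real.exp (m * g x) ∂ν := integral_exp_pos hexp
      rw [Real.log_le_iff_le_exp hpos]
      refine le_trans hmgf (le_of_eq ?_)
      norm_num
    have h4 : m ^ 2 ≤ 2 * K := by nlinarith
    have hK0 : 0 ≤ 2 * K := le_trans (sq_nonneg _) h4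
    rw [show (2 : ℝ≥0∞) = ENNReal.ofReal 2 by simp, ← ENNReal.ofReal_mul (by norm_num),
      ENNReal.ofReal_rpow_of_nonneg hK0 (by norm_num), ← Real.sqrt_eq_rpow]
    exact ENNReal.ofReal_le_ofReal (Real.abs_le_sqrt h4)
  · simp

instance aux_coin_prob : IsProbabilityMeasure coin := by
  constructor
  simp [coin, ENNReal.inv_two_add_inv_two]

theorem aux_prod_coin {α : Type*} [MeasurableSpace α] (P : Measure α) [IsProbabilityMeasure P]
    (d : α → ℝ) (hd : Measurable d) (hb : ∀ x, d x ∈ Set.Icc (-1 : ℝ) 1) :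
    ∫ p : α × Bool, (if p.2 then d p.1 else - d p.1) ∂(P.prod coin) = 0 := by
  have hm : Measurable (fun p : α × Bool => (if p.2 then d p.1 else - d p.1)) :=
    measurable_from_prod_countable_left fun y => by cases y <;> simp <;> fun_prop
  rw [integral_prod]
  · have : ∀ x, ∫ y, (if y then d x else - d x) ∂coin = 0 := by
      intro x
      rw [coin, integral_add_measure, integral_smul_measure, integral_smul_measure]
      · simp
      all_goals exact (Integrable.of_finite).smul_measure (by simp)
    simp [this]
  · refine Integrable.of_mem_Icc (-1) 1 hm.aemeasurable (ae_of_all _ fun p => ?_)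
    have := hb p.1
    simp only [Set.mem_Icc] at *
    split_ifs <;> constructor <;> linarith

theorem aux_atom {𝒳 𝒴 : Type*} [MeasurableSpace 𝒳] [MeasurableSpace 𝒴] [Countable 𝒴]
    [MeasurableSingletonClass 𝒴] (PZ : Measure (𝒳 × 𝒴)) :
    ∀ᵐ p ∂PZ, PZ (Prod.snd ⁻¹' {p.2}) ≠ 0 := by
  have : ∀ y : 𝒴, ∀ᵐ p ∂PZ, p.2 = y → PZ (Prod.snd ⁻¹' {p.2}) ≠ 0 := by
    intro y
    by_cases h : PZ (Prod.snd ⁻¹' {y}) = 0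
    · have h' : ∀ᵐ p ∂PZ, p ∉ (Prod.snd ⁻¹' {y} : Set (𝒳 × 𝒴)) := measure_eq_zero_iff_ae_notMem.1 h
      filter_upwards [h'] with p hp hpy
      exact absurd hpy hp
    · exact ae_of_all _ fun p hp => by rwa [hp]
  rw [← ae_all_iff] at this
  filter_upwards [this] with p hp using hp _ rfl

/-- **Corollary C.3 (label-dependent f-CMI bound for the standard generalization error)**:
in the super-sample setting with predictions and a bounded loss `ℓ(f_w(x),y) ∈ [0,1]`,
the standard expected generalization error satisfies
`|gen| ≤ E_{Y'∼P_Y}[E_{Z_{[2n]}}[(1/n^{Y'}) Σ_i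
    sqrt (2 max(𝟙{Y_i⁻=Y'},𝟙{Y_i⁺=Y'}) I_{Z_{[2n]}}(f_W(X_i^±);U_i))]]`. -/
theorem standard_gen_classwise_fCMI_bound
    {Ω 𝒲 𝒳 𝒴 Yhat : Type*}
    [mΩ : MeasurableSpace Ω] [StandardBorelSpace Ω] [Nonempty Ω]
    [MeasurableSpace 𝒲] [StandardBorelSpace 𝒲] [Nonempty 𝒲]
    [MeasurableSpace 𝒳] [StandardBorelSpace 𝒳]
    [MeasurableSpace 𝒴] [Countable 𝒴] [MeasurableSingletonClass 𝒴] [DecidableEq 𝒴]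
    [MeasurableSpace Yhat] [StandardBorelSpace Yhat] [Nonempty Yhat]
    (μ : Measure Ω) [IsProbabilityMeasure μ]
    (n : ℕ) (hn : 0 < n)
    (PZ : Measure (𝒳 × 𝒴)) [IsProbabilityMeasure PZ]
    (Z : Ω → Fin n → (𝒳 × 𝒴) × (𝒳 × 𝒴)) (hZ : Measurable Z)
    (U : Ω → Fin n → Bool) (hU : Measurable U)
    (W : Ω → 𝒲) (hW : Measurable W)
    (hlaw : μ.map (fun ω => (Z ω, U ω)) =
      (Measure.pi fun _ : Fin n => PZ.prod PZ).prod (Measure.pi fun _ : Fin n => coin))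
    (hSle : MeasurableSpace.comap (fun ω (i : Fin n) => trainSel (Z ω i) (U ω i))
        inferInstance ≤ mΩ)
    (hMarkov : CondIndepFun
      (MeasurableSpace.comap (fun ω (i : Fin n) => trainSel (Z ω i) (U ω i)) inferInstance)
      hSle W (fun ω => (Z ω, U ω)) μ)
    (f : 𝒲 → 𝒳 → Yhat) (hf : Measurable fun p : 𝒲 × 𝒳 => f p.1 p.2)
    (ℓ : Yhat → 𝒴 → ℝ) (hℓ : Measurable fun p : Yhat × 𝒴 => ℓ p.1 p.2)
    (hℓ01 : ∀ p y', ℓ p y' ∈ Set.Icc (0 : ℝ) 1) :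
    ENNReal.ofReal
        |∫ ω, (1 / (n : ℝ)) *
            ∑ i, (ℓ (f (W ω) (testSel (Z ω i) (U ω i)).1) (testSel (Z ω i) (U ω i)).2 -
                  ℓ (f (W ω) (trainSel (Z ω i) (U ω i)).1) (trainSel (Z ω i) (U ω i)).2) ∂μ|
      ≤ ∫⁻ y, (∫⁻ z, ENNReal.ofReal (1 / ((n : ℝ) * (PZ (Prod.snd ⁻¹' {y})).toReal)) *
            ∑ i, (2 * max (if (z i).1.2 = y then (1 : ℝ≥0∞) else 0)
                          (if (z i).2.2 = y then (1 : ℝ≥0∞) else 0) *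
                  dCMI μ (fun ω => (f (W ω) ((Z ω i).1.1), f (W ω) ((Z ω i).2.1)))
                    (fun ω => U ω i) Z z) ^ (1 / 2 : ℝ)
            ∂(μ.map Z))
          ∂(PZ.map Prod.snd) := by
  classical
  let A : Fin n → Ω → Yhat × Yhat :=
    fun i ω => (f (W ω) ((Z ω i).1.1), f (W ω) ((Z ω i).2.1))
  let V : Fin n → Ω → (Yhat × Yhat) × Bool := fun i ω => (A i ω, U ω i)
  let d : Fin n → (Fin n → (𝒳 × 𝒴) × (𝒳 × 𝒴)) → Yhat × Yhat → ℝ :=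
    fun i z a => ℓ a.1 (z i).1.2 - ℓ a.2 (z i).2.2
  let G : Fin n → (Fin n → (𝒳 × 𝒴) × (𝒳 × 𝒴)) × ((Yhat × Yhat) × Bool) → ℝ :=
    fun i q => if q.2.2 then d i q.1 q.2.1 else - d i q.1 q.2.1
  let h : Fin n → (Fin n → (𝒳 × 𝒴) × (𝒳 × 𝒴)) → ℝ :=
    fun i z => ∫ v, G i (z, v) ∂(condDistrib (V i) Z μ z)
  have hUi : ∀ i, Measurable fun ω => U ω i := fun i => (measurable_pi_apply i).comp hU
  have hZi : ∀ i, Measurable fun ω => Z ω i := fun i => (measurable_pi_apply i).comp hZ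
  have hA : ∀ i, Measurable (A i) := by
    intro i
    have h1 : Measurable fun ω => f (W ω) ((Z ω i).1.1) :=
      hf.comp (hW.prodMk (hZi i).fst.fst)
    have h2 : Measurable fun ω => f (W ω) ((Z ω i).2.1) :=
      hf.comp (hW.prodMk (hZi i).snd.fst)
    exact h1.prodMk h2
  have hV : ∀ i, Measurable (V i) := fun i => (hA i).prodMk (hUi i)
  have hd : ∀ i, Measurable fun q : (Fin n → (𝒳 × 𝒴) × (𝒳 × 𝒴)) × (Yhat × Yhat) =>
      d i q.1 q.2 := by
    intro i
    have h0 : Measurable fun q : (Fin n → (𝒳 × 𝒴) × (𝒳 × 𝒴)) × (Yhat × Yhat) => q.1 i :=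
      (measurable_pi_apply i).comp measurable_fst
    have h1 : Measurable fun q : (Fin n → (𝒳 × 𝒴) × (𝒳 × 𝒴)) × (Yhat × Yhat) =>
        ℓ q.2.1 (q.1 i).1.2 := hℓ.comp (measurable_snd.fst.prodMk h0.fst.snd)
    have h2 : Measurable fun q : (Fin n → (𝒳 × 𝒴) × (𝒳 × 𝒴)) × (Yhat × Yhat) =>
        ℓ q.2.2 (q.1 i).2.2 := hℓ.comp (measurable_snd.snd.prodMk h0.snd.snd)
    exact h1.sub h2
  have hdb : ∀ i z a, d i z a ∈ Set.Icc (-1 : ℝ) 1 := by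
    intro i z a
    have h1 := hℓ01 a.1 (z i).1.2
    have h2 := hℓ01 a.2 (z i).2.2
    simp only [Set.mem_Icc, d] at *
    constructor <;> linarith
  have hG : ∀ i, Measurable (G i) := by
    intro i
    have h1 : Measurable fun q : (Fin n → (𝒳 × 𝒴) × (𝒳 × 𝒴)) × ((Yhat × Yhat) × Bool) =>
        d i q.1 q.2.1 := (hd i).comp (measurable_fst.prodMk measurable_snd.fst)
    refine Measurable.ite ?_ h1 h1.neg
    exact (measurable_snd.snd) (measurableSet_singleton true)
  have hGb : ∀ i q, G i q ∈ Set.Icc (-1 : ℝ) 1 := by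
    intro i q
    have := hdb i q.1 q.2.1
    simp only [Set.mem_Icc, G] at *
    split_ifs <;> constructor <;> linarith
  have hh : ∀ i, Measurable (h i) := by
    intro i
    exact ((hG i).stronglyMeasurable.integral_kernel_prod_right'
      (κ := condDistrib (V i) Z μ)).measurable
  have hlawZ : μ.map Z = Measure.pi fun _ : Fin n => PZ.prod PZ := by
    have := congrArg Measure.fst hlaw
    rw [Measure.fst_map_prodMk hU] at this
    simpa using this
  have hlawU : ∀ i, μ.map (fun ω => (Z ω, U ω i)) = (μ.map Z).prod coin := by
    intro i
    have h1 : μ.map (fun ω => (Z ω, U ω i)) =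
        (μ.map (fun ω => (Z ω, U ω))).map (Prod.map id (Function.eval i)) := by
      rw [Measure.map_map (by fun_prop) (by fun_prop)]
      rfl
    rw [h1, hlaw, ← Measure.map_prod_map _ _ measurable_id (measurable_pi_apply i),
      (measurePreserving_eval (fun _ : Fin n => coin) i).map_eq, Measure.map_id, hlawZ]
  have hcU : ∀ i, ∀ᵐ z ∂(μ.map Z), condDistrib (fun ω => U ω i) Z μ z = coin := by
    intro i
    have := condDistrib_ae_eq_of_measure_eq_compProd (μ := μ) Z (hUi i).aemeasurable
      (κ := Kernel.const _ coin) (by rw [hlawU i, Measure.compProd_const])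
    filter_upwards [this] with z hz
    rw [hz, Kernel.const_apply]
  -- pointwise bound
  have hpt : ∀ i, ∀ᵐ z ∂(μ.map Z), ENNReal.ofReal |h i z| ≤
      (2 * dCMI μ (A i) (fun ω => U ω i) Z z) ^ (1 / 2 : ℝ) := by
    intro i
    filter_upwards [hcU i] with z hz
    unfold dCMI
    refine aux_KL _ _ (fun v => G i (z, v)) ((hG i).comp measurable_prodMk_left)
      (fun v => hGb i _) ?_
    rw [hz]
    exact aux_prod_coin _ (d i z) ((hd i).comp measurable_prodMk_left) (hdb i z)
  have hat : ∀ i, ∀ᵐ z ∂(μ.map Z), PZ (Prod.snd ⁻¹' {(z i).1.2}) ≠ 0 := by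
    intro i
    rw [hlawZ]
    have q1 : Measure.QuasiMeasurePreserving (fun z : Fin n → (𝒳 × 𝒴) × (𝒳 × 𝒴) => z i)
      (Measure.pi fun _ : Fin n => PZ.prod PZ) (PZ.prod PZ) :=
      (measurePreserving_eval (fun _ : Fin n => PZ.prod PZ) i).quasiMeasurePreserving
    exact q1.ae (Measure.quasiMeasurePreserving_fst.ae (aux_atom PZ))
  have hint : ∀ i, Integrable (G i) ((μ.map Z) ⊗ₘ condDistrib (V i) Z μ) := by
    intro i
    rw [compProd_map_condDistrib (hV i).aemeasurable]
    have : IsProbabilityMeasure (μ.map fun ω => (Z ω, V i ω)) :=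
      Measure.isProbabilityMeasure_map (hZ.prodMk (hV i)).aemeasurable
    exact Integrable.of_mem_Icc (-1) 1 (hG i).aemeasurable (ae_of_all _ (hGb i))
  have hgen : ∀ i, ∫ ω, G i (Z ω, V i ω) ∂μ = ∫ z, h i z ∂(μ.map Z) := by
    intro i
    have := Measure.integral_compProd (hint i)
    rw [compProd_map_condDistrib (hV i).aemeasurable,
      integral_map (hZ.prodMk (hV i)).aemeasurable (hG i).aestronglyMeasurable] at this
    exact this
  have hGint : ∀ i, Integrable (fun ω => G i (Z ω, V i ω)) μ := fun i =>
    Integrable.of_mem_Icc (-1) 1 ((hG i).comp (hZ.prodMk (hV i))).aemeasurable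
      (ae_of_all _ fun _ => hGb i _)
  have : IsProbabilityMeasure (μ.map Z) := Measure.isProbabilityMeasure_map hZ.aemeasurable
  have : IsProbabilityMeasure (PZ.map Prod.snd) :=
    Measure.isProbabilityMeasure_map measurable_snd.aemeasurable
  have hn' : (0 : ℝ) < n := by exact_mod_cast hn
  let c : 𝒴 → ℝ≥0∞ := fun y => ENNReal.ofReal (1 / ((n : ℝ) * (PZ (Prod.snd ⁻¹' {y})).toReal))
  have hc : ∀ y, PZ (Prod.snd ⁻¹' {y}) ≠ 0 →
      c y * (PZ.map Prod.snd) {y} = ENNReal.ofReal (1 / n) := by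
    intro y hy
    rw [Measure.map_apply measurable_snd (measurableSet_singleton y)]
    have hp : 0 < (PZ (Prod.snd ⁻¹' {y})).toReal :=
      ENNReal.toReal_pos hy (measure_ne_top _ _)
    rw [← ENNReal.ofReal_toReal (measure_ne_top PZ (Prod.snd ⁻¹' {y}))]
    simp only [c]
    rw [← ENNReal.ofReal_mul (by positivity)]
    congr 1
    field_simp
  calc _ = ENNReal.ofReal |(1 / (n : ℝ)) * ∑ i, ∫ z, h i z ∂(μ.map Z)| := by
        congr 2
        rw [integral_const_mul]
        congr 1
        rw [← Finset.sum_congr rfl fun i _ => hgen i, ← integral_finsetSum _ fun i _ => hGint i]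
        refine integral_congr_ae (ae_of_all _ fun ω => Finset.sum_congr rfl fun i _ => ?_)
        cases hu : U ω i <;> simp [G, V, A, d, testSel, trainSel, hu]
    _ ≤ ENNReal.ofReal (1 / n) * ∑ i, ∫⁻ z, ENNReal.ofReal |h i z| ∂(μ.map Z) := by
        rw [abs_mul, ENNReal.ofReal_mul (abs_nonneg _), abs_of_nonneg (by positivity)]
        gcongr
        refine (ENNReal.ofReal_le_ofReal (Finset.abs_sum_le_sum_abs _ _)).trans ?_
        rw [ENNReal.ofReal_sum_of_nonneg fun i _ => abs_nonneg _]
        refine Finset.sum_le_sum fun i _ => ?_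
        have := enorm_integral_le_lintegral_enorm (μ := μ.map Z) (h i)
        simpa only [Real.enorm_eq_ofReal_abs] using this
    _ = ∫⁻ z, ∑ i, ENNReal.ofReal (1 / n) * ENNReal.ofReal |h i z| ∂(μ.map Z) := by
        rw [lintegral_finsetSum _ fun i _ => by have := hh i; fun_prop, Finset.mul_sum]
        refine Finset.sum_congr rfl fun i _ => ?_
        rw [lintegral_const_mul _ (by have := hh i; fun_prop)]
    _ = ∫⁻ z, ∫⁻ y, c y * ∑ i, (if (z i).1.2 = y then ENNReal.ofReal |h i z| else 0)
          ∂(PZ.map Prod.snd) ∂(μ.map Z) := by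
        refine lintegral_congr_ae ?_
        filter_upwards [ae_all_iff.2 hat] with z hz
        simp_rw [Finset.mul_sum]
        rw [lintegral_finsetSum _ fun i _ => Measurable.of_discrete]
        refine Finset.sum_congr rfl fun i _ => ?_
        have : ∀ y, c y * (if (z i).1.2 = y then ENNReal.ofReal |h i z| else 0) =
            ({(z i).1.2} : Set 𝒴).indicator
              (fun _ => c (z i).1.2 * ENNReal.ofReal |h i z|) y := by
          intro y
          by_cases hy : (z i).1.2 = y
          · subst hy; simp
          · simp [hy, Ne.symm hy]
        simp_rw [this]
        rw [lintegral_indicator_const (measurableSet_singleton _), mul_right_comm, hc _ (hz i)]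
    _ = ∫⁻ y, ∫⁻ z, c y * ∑ i, (if (z i).1.2 = y then ENNReal.ofReal |h i z| else 0)
          ∂(μ.map Z) ∂(PZ.map Prod.snd) := by
        refine lintegral_lintegral_swap (Measurable.aemeasurable ?_)
        refine measurable_from_prod_countable_left fun y => ?_
        simp only [Function.uncurry]
        refine (Finset.measurable_sum _ fun i _ => ?_).const_mul _
        refine Measurable.ite ?_ (by have := hh i; fun_prop) measurable_const
        have : Measurable fun z : Fin n → (𝒳 × 𝒴) × (𝒳 × 𝒴) => (z i).1.2 := by fun_prop
        exact this (measurableSet_singleton y)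
    _ ≤ _ := by
        refine lintegral_mono fun y => lintegral_mono_ae ?_
        filter_upwards [ae_all_iff.2 hpt] with z hz
        refine mul_le_mul_right (Finset.sum_le_sum fun i _ => ?_) _
        split_ifs with h1 h2 h2
        · simpa using hz i
        · simpa using hz i
        · exact zero_le
        · exact zero_le
end
end

section
/- Assume the loss has the form ℓ(w,x,y) = ℓ(f_w(x),y) with values in [0,1]. Then the standard expected generalization error gen = E[(1/n) Σ_{i=1}^n (ℓ(W,Z_i^{−U_i}) − ℓ(W,Z_i^{U_i}))] satisfies |gen| ≤ E_{Y'~P_Y}[E_{Z_{[2n]}}[(1/n^{Y'}) Σ_{i=1}^n sqrt(2·max(𝟙{Y_i^-=Y'}, 𝟙{Y_i^+=Y'})·I_{Z_{[2n]}}(L_i^±;U_i))]]. -/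
open MeasureTheory ProbabilityTheory
open scoped ENNReal

noncomputable section

instance coin_isProb : IsProbabilityMeasure coin := by
  constructor
  simp [coin, ENNReal.inv_two_add_inv_two]

/-- Clipped, signed loss difference. -/
def sgnDiff (p : (ℝ × ℝ) × Bool) : ℝ :=
  (if p.2 then (1 : ℝ) else -1) * max (-1) (min 1 (p.1.1 - p.1.2))

lemma measurable_sgnDiff : Measurable sgnDiff := by
  unfold sgnDiff
  refine Measurable.mul ?_ (by fun_prop)
  exact (measurable_of_countable (fun b : Bool => if b then (1 : ℝ) else -1)).comp measurable_snd

lemma abs_clip (x : ℝ) : |max (-1) (min 1 x)| ≤ 1 := by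
  rw [abs_le]
  exact ⟨le_max_left _ _, max_le (by norm_num) (min_le_left _ _)⟩

lemma abs_sgnDiff (p : (ℝ × ℝ) × Bool) : |sgnDiff p| ≤ 1 := by
  unfold sgnDiff
  rw [abs_mul]
  have := abs_clip (p.1.1 - p.1.2)
  split_ifs <;> simpa using this

lemma integrable_sgnDiff (P : Measure ((ℝ × ℝ) × Bool)) [IsFiniteMeasure P] :
    Integrable sgnDiff P :=
  Integrable.of_bound measurable_sgnDiff.aestronglyMeasurable 1
    (Filter.Eventually.of_forall abs_sgnDiff)

lemma integrable_exp_sgnDiff (Q : Measure ((ℝ × ℝ) × Bool)) [IsFiniteMeasure Q] (t : ℝ) :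
    Integrable (fun p => Real.exp (t * sgnDiff p)) Q := by
  refine Integrable.of_bound
    (Real.measurable_exp.comp (measurable_sgnDiff.const_mul t)).aestronglyMeasurable
    (Real.exp |t|) (Filter.Eventually.of_forall fun p => ?_)
  rw [Real.norm_eq_abs, abs_of_pos (Real.exp_pos _), Real.exp_le_exp]
  calc t * sgnDiff p ≤ |t * sgnDiff p| := le_abs_self _
    _ = |t| * |sgnDiff p| := abs_mul _ _
    _ ≤ |t| * 1 := by gcongr; exact abs_sgnDiff p
    _ = |t| := mul_one _

lemma mgf_bound_s13 (A : Measure (ℝ × ℝ)) [IsProbabilityMeasure A] (t : ℝ) :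
    ∫ p, Real.exp (t * sgnDiff p) ∂(A.prod coin) ≤ Real.exp (t ^ 2 / 2) := by
  have hi := integrable_exp_sgnDiff (A.prod coin) t
  rw [integral_prod _ hi]
  have : ∀ a : ℝ × ℝ, ∫ u, Real.exp (t * sgnDiff (a, u)) ∂coin ≤ Real.exp (t ^ 2 / 2) := by
    intro a
    rw [integral_coin]
    have e : (Real.exp (t * sgnDiff (a, true)) + Real.exp (t * sgnDiff (a, false))) / 2
        = Real.cosh (t * max (-1) (min 1 (a.1 - a.2))) := by
      rw [Real.cosh_eq]; simp [sgnDiff]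
    rw [e]
    refine (Real.cosh_le_exp_half_sq _).trans (Real.exp_le_exp.2 ?_)
    have h1 := (sq_le_one_iff_abs_le_one _).2 (abs_clip (a.1 - a.2))
    rw [mul_pow]
    nlinarith [sq_nonneg t]
  calc ∫ a, ∫ u, Real.exp (t * sgnDiff (a, u)) ∂coin ∂A
      ≤ ∫ a, Real.exp (t ^ 2 / 2) ∂A :=
        integral_mono hi.integral_prod_left (integrable_const _) this
    _ = _ := by simp

lemma KL_bound (P : Measure ((ℝ × ℝ) × Bool)) [IsProbabilityMeasure P]
    (A : Measure (ℝ × ℝ)) [IsProbabilityMeasure A] :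
    ENNReal.ofReal |∫ p, sgnDiff p ∂P| ≤ (2 * KL P (A.prod coin)) ^ (1 / 2 : ℝ) := by
  unfold KL
  split_ifs with h
  swap
  · simp
  obtain ⟨hac, hint⟩ := h
  set m := ∫ p, sgnDiff p ∂P with hm
  set Q := A.prod coin
  have hfP : Integrable (fun p => m * sgnDiff p) P := (integrable_sgnDiff P).const_mul m
  have hfQ := integrable_exp_sgnDiff Q m
  have : IsProbabilityMeasure (Q.tilted fun p => m * sgnDiff p) := isProbabilityMeasure_tilted hfQ
  have h0 := InformationTheory.integral_llr_add_sub_measure_univ_nonneg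
    (hac.trans (absolutelyContinuous_tilted hfQ))
    (integrable_llr_tilted_right hac hfP hint hfQ)
  rw [integral_llr_tilted_right hac hfP hfQ hint, integral_const_mul, ← hm] at h0
  have hpos : 0 < ∫ p, Real.exp (m * sgnDiff p) ∂Q := integral_exp_pos hfQ
  have hlog : Real.log (∫ p, Real.exp (m * sgnDiff p) ∂Q) ≤ m ^ 2 / 2 := by
    rw [Real.log_le_iff_le_exp hpos]; exact mgf_bound_s13 A m
  simp only [probReal_univ] at h0
  have hfin : m ^ 2 ≤ 2 * ∫ x, llr P Q x ∂P := by nlinarith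
  have e2 : (2 : ℝ≥0∞) = ENNReal.ofReal 2 := by simp
  rw [e2, ← ENNReal.ofReal_mul (by norm_num), ENNReal.ofReal_rpow_of_nonneg
    ((sq_nonneg m).trans hfin) (by norm_num), ← Real.sqrt_eq_rpow]
  exact ENNReal.ofReal_le_ofReal (Real.abs_le_sqrt hfin)

/-- **Corollary C.4 (label-dependent e-CMI bound for the standard generalization error)**:
in the super-sample setting with predictions and a bounded loss `ℓ(f_w(x),y) ∈ [0,1]`,
the standard expected generalization error satisfies
`|gen| ≤ E_{Y'∼P_Y}[E_{Z_{[2n]}}[(1/n^{Y'}) Σ_i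
    sqrt (2 max(𝟙{Y_i⁻=Y'},𝟙{Y_i⁺=Y'}) I_{Z_{[2n]}}(L_i^±;U_i))]]`,
where `L_i^± = (ℓ(f_W(X_i⁻),Y_i⁻), ℓ(f_W(X_i⁺),Y_i⁺))`. -/
theorem standard_gen_classwise_eCMI_bound
    {Ω 𝒲 𝒳 𝒴 Yhat : Type*}
    [mΩ : MeasurableSpace Ω] [StandardBorelSpace Ω] [Nonempty Ω]
    [MeasurableSpace 𝒲] [StandardBorelSpace 𝒲] [Nonempty 𝒲]
    [MeasurableSpace 𝒳] [StandardBorelSpace 𝒳]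
    [MeasurableSpace 𝒴] [Countable 𝒴] [MeasurableSingletonClass 𝒴] [DecidableEq 𝒴]
    [MeasurableSpace Yhat] [StandardBorelSpace Yhat] [Nonempty Yhat]
    (μ : Measure Ω) [IsProbabilityMeasure μ]
    (n : ℕ) (hn : 0 < n)
    (PZ : Measure (𝒳 × 𝒴)) [IsProbabilityMeasure PZ]
    (Z : Ω → Fin n → (𝒳 × 𝒴) × (𝒳 × 𝒴)) (hZ : Measurable Z)
    (U : Ω → Fin n → Bool) (hU : Measurable U)
    (W : Ω → 𝒲) (hW : Measurable W)
    (hlaw : μ.map (fun ω => (Z ω, U ω)) =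
      (Measure.pi fun _ : Fin n => PZ.prod PZ).prod (Measure.pi fun _ : Fin n => coin))
    (hSle : MeasurableSpace.comap (fun ω (i : Fin n) => trainSel (Z ω i) (U ω i))
        inferInstance ≤ mΩ)
    (hMarkov : CondIndepFun
      (MeasurableSpace.comap (fun ω (i : Fin n) => trainSel (Z ω i) (U ω i)) inferInstance)
      hSle W (fun ω => (Z ω, U ω)) μ)
    (f : 𝒲 → 𝒳 → Yhat) (hf : Measurable fun p : 𝒲 × 𝒳 => f p.1 p.2)
    (ℓ : Yhat → 𝒴 → ℝ) (hℓ : Measurable fun p : Yhat × 𝒴 => ℓ p.1 p.2)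
    (hℓ01 : ∀ p y', ℓ p y' ∈ Set.Icc (0 : ℝ) 1) :
    ENNReal.ofReal
        |∫ ω, (1 / (n : ℝ)) *
            ∑ i, (ℓ (f (W ω) (testSel (Z ω i) (U ω i)).1) (testSel (Z ω i) (U ω i)).2 -
                  ℓ (f (W ω) (trainSel (Z ω i) (U ω i)).1) (trainSel (Z ω i) (U ω i)).2) ∂μ|
      ≤ ∫⁻ y, (∫⁻ z, ENNReal.ofReal (1 / ((n : ℝ) * (PZ (Prod.snd ⁻¹' {y})).toReal)) *
            ∑ i, (2 * max (if (z i).1.2 = y then (1 : ℝ≥0∞) else 0)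
                          (if (z i).2.2 = y then (1 : ℝ≥0∞) else 0) *
                  dCMI μ (fun ω => (ℓ (f (W ω) ((Z ω i).1.1)) ((Z ω i).1.2),
                      ℓ (f (W ω) ((Z ω i).2.1)) ((Z ω i).2.2)))
                    (fun ω => U ω i) Z z) ^ (1 / 2 : ℝ)
            ∂(μ.map Z))
          ∂(PZ.map Prod.snd) := by
  classical
  set L : Fin n → Ω → ℝ × ℝ := fun i ω => (ℓ (f (W ω) ((Z ω i).1.1)) ((Z ω i).1.2),
                      ℓ (f (W ω) ((Z ω i).2.1)) ((Z ω i).2.2)) with hL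
  have hLm : ∀ i, Measurable (L i) := by
    intro i
    have hZi : Measurable fun ω => Z ω i := (measurable_pi_apply i).comp hZ
    refine Measurable.prodMk ?_ ?_
    · exact hℓ.comp ((hf.comp (hW.prodMk hZi.fst.fst)).prodMk hZi.fst.snd)
    · exact hℓ.comp ((hf.comp (hW.prodMk hZi.snd.fst)).prodMk hZi.snd.snd)
  have hUi : ∀ i, Measurable fun ω => U ω i := fun i => (measurable_pi_apply i).comp hU
  have hZlaw : μ.map Z = Measure.pi fun _ : Fin n => PZ.prod PZ := by
    have := congrArg (Measure.map Prod.fst) hlaw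
    rw [Measure.map_map measurable_fst (hZ.prodMk hU)] at this
    simpa [Function.comp_def] using this
  have : IsProbabilityMeasure (μ.map Z) := Measure.isProbabilityMeasure_map hZ.aemeasurable
  -- the law of each selector given the super-sample
  have hcoin : ∀ i, condDistrib (fun ω => U ω i) Z μ =ᵐ[μ.map Z]
      Kernel.const _ coin := by
    intro i
    refine condDistrib_ae_eq_of_measure_eq_compProd _ (hUi i).aemeasurable ?_
    rw [Measure.compProd_const, hZlaw]
    have := congrArg (Measure.map (Prod.map id (fun u : Fin n → Bool => u i))) hlaw
    rw [Measure.map_map (by fun_prop) (hZ.prodMk hU), ← Measure.map_prod_map _ _ (by fun_prop)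
      (by fun_prop), Measure.map_id, (measurePreserving_eval _ i).map_eq] at this
    exact this
  set g : Fin n → (Fin n → (𝒳 × 𝒴) × (𝒳 × 𝒴)) → ℝ := fun i z =>
    ∫ p, sgnDiff p ∂(condDistrib (fun ω => (L i ω, U ω i)) Z μ z) with hg
  have hgm : ∀ i, Measurable (g i) := by
    intro i
    exact (measurable_sgnDiff.stronglyMeasurable.integral_kernel).measurable
  have hbound : ∀ i, ∀ᵐ z ∂(μ.map Z), ENNReal.ofReal |g i z| ≤
      (2 * dCMI μ (L i) (fun ω => U ω i) Z z) ^ (1 / 2 : ℝ) := by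
    intro i
    filter_upwards [hcoin i] with z hz
    unfold dCMI
    rw [hz, Kernel.const_apply]
    exact KL_bound _ _
  have hgen : ∀ i, ∫ ω, sgnDiff (L i ω, U ω i) ∂μ = ∫ z, g i z ∂(μ.map Z) := by
    intro i
    have hm : Measurable fun ω => (L i ω, U ω i) := (hLm i).prodMk (hUi i)
    rw [← integral_map (φ := fun ω => (L i ω, U ω i)) hm.aemeasurable
      measurable_sgnDiff.aestronglyMeasurable,
      ← condDistrib_comp_map hZ.aemeasurable hm.aemeasurable, Measure.comp_eq_comp_const_apply,
      Kernel.integral_comp (integrable_sgnDiff _), Kernel.const_apply]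
  have hsel : ∀ ω i, ℓ (f (W ω) (testSel (Z ω i) (U ω i)).1) (testSel (Z ω i) (U ω i)).2 -
      ℓ (f (W ω) (trainSel (Z ω i) (U ω i)).1) (trainSel (Z ω i) (U ω i)).2
      = sgnDiff (L i ω, U ω i) := by
    intro ω i
    have h1 := hℓ01 (f (W ω) ((Z ω i).1.1)) ((Z ω i).1.2)
    have h2 := hℓ01 (f (W ω) ((Z ω i).2.1)) ((Z ω i).2.2)
    have hc : max (-1) (min 1 ((L i ω).1 - (L i ω).2)) = (L i ω).1 - (L i ω).2 := by
      simp only [hL]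
      rw [min_eq_right (by linarith [h1.2, h2.1]), max_eq_right (by linarith [h1.1, h2.2])]
    simp only [sgnDiff, hc]
    cases U ω i <;> simp [testSel, trainSel, hL]
  have hlhs : ENNReal.ofReal
        |∫ ω, (1 / (n : ℝ)) *
            ∑ i, (ℓ (f (W ω) (testSel (Z ω i) (U ω i)).1) (testSel (Z ω i) (U ω i)).2 -
                  ℓ (f (W ω) (trainSel (Z ω i) (U ω i)).1) (trainSel (Z ω i) (U ω i)).2) ∂μ|
      ≤ ENNReal.ofReal (1 / n) * ∫⁻ z, ∑ i, ENNReal.ofReal |g i z| ∂(μ.map Z) := by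
    simp only [hsel]
    have hint : ∀ i, Integrable (fun ω => sgnDiff (L i ω, U ω i)) μ := fun i =>
      Integrable.of_bound
        (measurable_sgnDiff.comp ((hLm i).prodMk (hUi i))).aestronglyMeasurable 1
        (Filter.Eventually.of_forall fun ω => abs_sgnDiff _)
    rw [integral_const_mul, abs_mul, abs_of_nonneg (by positivity : (0 : ℝ) ≤ 1 / n),
      ENNReal.ofReal_mul (by positivity), integral_finsetSum _ (fun i _ => hint i),
      lintegral_finsetSum _ (fun i _ => by
        exact ENNReal.measurable_ofReal.comp (continuous_abs.measurable.comp (hgm i)))]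
    gcongr
    refine (ENNReal.ofReal_le_ofReal (Finset.abs_sum_le_sum_abs _ _)).trans ?_
    rw [ENNReal.ofReal_sum_of_nonneg (fun i _ => abs_nonneg _)]
    refine Finset.sum_le_sum fun i _ => ?_
    rw [hgen i, ← Real.norm_eq_abs]
    have := enorm_integral_le_lintegral_enorm (μ := μ.map Z) (g i)
    simpa [← ofReal_norm] using this
  refine hlhs.trans ?_
  rw [lintegral_countable' (μ := PZ.map Prod.snd)]
  -- pointwise lower bound of the class-wise integrals
  have hind : ∀ (y : 𝒴) (i : Fin n),
      Measurable fun z : Fin n → (𝒳 × 𝒴) × (𝒳 × 𝒴) =>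
        (if (z i).1.2 = y then ENNReal.ofReal |g i z| else 0) := by
    intro y i
    refine Measurable.ite ?_ (ENNReal.measurable_ofReal.comp
      (continuous_abs.measurable.comp (hgm i))) measurable_const
    exact (measurable_pi_apply i).fst.snd (measurableSet_singleton y)
  have hclass : ∀ y : 𝒴, ENNReal.ofReal (1 / n) *
        ∫⁻ z, ∑ i, (if (z i).1.2 = y then ENNReal.ofReal |g i z| else 0) ∂(μ.map Z) ≤
      (∫⁻ z, ENNReal.ofReal (1 / ((n : ℝ) * (PZ (Prod.snd ⁻¹' {y})).toReal)) *
            ∑ i, (2 * max (if (z i).1.2 = y then (1 : ℝ≥0∞) else 0)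
                          (if (z i).2.2 = y then (1 : ℝ≥0∞) else 0) *
                  dCMI μ (L i) (fun ω => U ω i) Z z) ^ (1 / 2 : ℝ) ∂(μ.map Z)) *
        (PZ.map Prod.snd) {y} := by
    intro y
    rw [Measure.map_apply measurable_snd (measurableSet_singleton y)]
    set p := PZ (Prod.snd ⁻¹' {y}) with hp
    by_cases hp0 : p = 0
    · have hz : ∀ᵐ z ∂(μ.map Z),
          ∑ i, (if (z i).1.2 = y then ENNReal.ofReal |g i z| else 0) = 0 := by
        have hi : ∀ i, ∀ᵐ z ∂(μ.map Z), (z i).1.2 ≠ y := by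
          intro i
          have h1 : ∀ᵐ x ∂PZ, x.2 ≠ y := by
            rw [ae_iff]
            simpa [hp, Set.preimage] using hp0
          have mp : MeasurePreserving (fun z : Fin n → (𝒳 × 𝒴) × (𝒳 × 𝒴) => (z i).1)
              (μ.map Z) PZ := by
            rw [hZlaw]
            exact measurePreserving_fst.comp
              (measurePreserving_eval (fun _ : Fin n => PZ.prod PZ) i)
          exact mp.quasiMeasurePreserving.ae h1
        filter_upwards [ae_all_iff.2 hi] with z hz
        simp [hz]
      rw [lintegral_congr_ae hz]
      simp
    · have hpt : p ≠ ∞ := measure_ne_top _ _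
      have hc : ENNReal.ofReal (1 / (n : ℝ)) =
          ENNReal.ofReal (1 / ((n : ℝ) * p.toReal)) * p := by
        have hpr : 0 < p.toReal := ENNReal.toReal_pos hp0 hpt
        have hnr : (0 : ℝ) < n := by exact_mod_cast hn
        conv_rhs => rw [← ENNReal.ofReal_toReal hpt]
        rw [ENNReal.toReal_ofReal hpr.le, ← ENNReal.ofReal_mul (by positivity)]
        congr 1
        field_simp
      rw [lintegral_const_mul' _ _ ENNReal.ofReal_ne_top, hc, mul_assoc, mul_comm p, ← mul_assoc]
      refine mul_le_mul_left ?_ p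
      refine mul_le_mul_right ?_ _
      refine lintegral_mono_ae ?_
      filter_upwards [ae_all_iff.2 hbound] with z hz
      refine Finset.sum_le_sum fun i _ => ?_
      by_cases h1 : (z i).1.2 = y
      · have h2 : (if (z i).2.2 = y then (1 : ℝ≥0∞) else 0) ≤ 1 := by split_ifs <;> simp
        rw [if_pos h1, if_pos h1, max_eq_left h2, mul_one]
        exact hz i
      · rw [if_neg h1]
        exact zero_le
  refine le_trans ?_ (ENNReal.tsum_le_tsum hclass)
  rw [ENNReal.tsum_mul_left, ← lintegral_tsum fun y =>
    (Finset.measurable_sum _ fun i _ => hind y i).aemeasurable]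
  gcongr with z
  rw [Summable.tsum_finsetSum (fun i _ => ENNReal.summable)]
  refine Finset.sum_le_sum fun i _ => ?_
  simp
end
end
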